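/- arXiv:1503.01492 — 4 statements merged into one kernel-verified Lean document; each statement's English description precedes it below -/
import Mathlib

section
/- Let k be an algebraically closed field of characteristic p > 0. Every nonzero finite-dimensional representation of the cyclic group C_p over k is isomorphic to a finite direct sum of copies of the representations L_1, ..., L_p; each L_s is indecomposable; and L_r ≅ L_s if and only if r = s. In particular the L_s, 1 ≤ s ≤ p, exhaust all isomorphism classes of indecomposable finite-dimensional representations of C_p over k. -/
/-- The nilpotent single Jordan block of size `s` (ones on the superdiagonal). -/
def jordanN (k : Type) [Field k] (s : ℕ) : Matrix (Fin s) (Fin s) k :=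
  Matrix.of fun i j => if (i : ℕ) + 1 = (j : ℕ) then 1 else 0

/-- The generator `σ` of `C_p` acting on `L_s = k^s` as the unipotent Jordan block `1 + N`
(i.e. multiplication by `1 + X` on `k[X]/(X^s)`). -/
def sigmaL (k : Type) [Field k] (s : ℕ) : (Fin s → k) →ₗ[k] (Fin s → k) :=
  ((1 : Matrix (Fin s) (Fin s) k) + jordanN k s).mulVecLin

theorem jN_apply (k : Type) [Field k] (s : ℕ) (x : Fin s → k) (i : Fin s) :
    (jordanN k s).mulVecLin x i = if h : (i : ℕ) + 1 < s then x ⟨(i : ℕ) + 1, h⟩ else 0 := by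
  simp only [Matrix.mulVecLin_apply, Matrix.mulVec, dotProduct, jordanN, Matrix.of_apply,
    ite_mul, one_mul, zero_mul]
  split_ifs with h
  · rw [Finset.sum_eq_single (⟨(i : ℕ) + 1, h⟩ : Fin s)]
    · simp
    · intro b _ hb
      rw [if_neg]
      intro hh
      exact hb (Fin.ext hh.symm)
    · simp
  · apply Finset.sum_eq_zero
    intro j _
    rw [if_neg]
    have := j.2
    omega

theorem sigmaL_eq (k : Type) [Field k] (s : ℕ) (x : Fin s → k) :
    sigmaL k s x = x + (jordanN k s).mulVecLin x := by
  simp [sigmaL, Matrix.add_mulVec]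

/-- A nonzero invariant subspace contains the socle vector. -/
theorem socle_mem (k : Type) [Field k] (t : ℕ) (W : Submodule k (Fin (t + 1) → k))
    (hW : ∀ x ∈ W, (jordanN k (t + 1)).mulVecLin x ∈ W) (hne : W ≠ ⊥) :
    Pi.single 0 1 ∈ W := by
  obtain ⟨x, hx, hx0⟩ := (Submodule.ne_bot_iff W).1 hne
  have key : ∀ n : ℕ, ∀ x ∈ W, x ≠ 0 → (∀ i : Fin (t + 1), n < (i : ℕ) → x i = 0) →
      Pi.single 0 1 ∈ W := by
    intro n
    induction n with
    | zero =>
      intro x hx hx0 hz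
      have hxe : x = x 0 • Pi.single (0 : Fin (t + 1)) (1 : k) := by
        ext i
        by_cases hi : i = 0
        · subst hi; simp
        · rw [hz i (by have : (i : ℕ) ≠ 0 := fun h => hi (Fin.ext h)
                       omega)]
          simp [hi]
      have h0 : x 0 ≠ 0 := by
        intro h
        rw [h, zero_smul] at hxe
        exact hx0 hxe
      rw [hxe] at hx
      exact (W.smul_mem_iff h0).1 hx
    | succ n ih =>
      intro x hx hx0 hz
      by_cases hJ : (jordanN k (t + 1)).mulVecLin x = 0
      · apply ih x hx hx0
        intro i hi
        have := congrFun hJ ⟨(i : ℕ) - 1, by omega⟩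
        rw [jN_apply, dif_pos (by simp; omega)] at this
        refine Eq.trans ?_ this
        congr 1
        apply Fin.ext
        simp
        omega
      · apply ih _ (hW x hx) hJ
        intro i hi
        rw [jN_apply]
        split_ifs with h
        · apply hz
          simp
          omega
        · rfl
  exact key (t + 1) x hx hx0 (fun i hi => by have := i.2; omega)

theorem split_step (k : Type) [Field k] (V : Type) [AddCommGroup V] [Module k V]
    (N : V →ₗ[k] V) (t : ℕ) (h1 : N ^ (t + 1) = 0) (h2 : N ^ t ≠ 0) :
    ∃ (T : V →ₗ[k] (Fin (t + 1) → k)) (S : (Fin (t + 1) → k) →ₗ[k] V),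
      (∀ x, T (N x) = (jordanN k (t + 1)).mulVecLin (T x)) ∧
      (∀ a, S ((jordanN k (t + 1)).mulVecLin a) = N (S a)) ∧ (∀ a, T (S a) = a) := by
  obtain ⟨v, hv⟩ : ∃ v, (N ^ t) v ≠ 0 := by
    by_contra! h
    exact h2 (LinearMap.ext h)
  obtain ⟨φ, hφ⟩ : ∃ φ : Module.Dual k V, φ ((N ^ t) v) ≠ 0 := by
    by_contra! h
    exact hv ((Module.forall_dual_apply_eq_zero_iff k _).1 h)
  let T : V →ₗ[k] (Fin (t + 1) → k) := LinearMap.pi fun i => φ ∘ₗ (N ^ (i : ℕ))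
  have hTa : ∀ x i, T x i = φ ((N ^ (i : ℕ)) x) := fun x i => rfl
  have hT : ∀ x, T (N x) = (jordanN k (t + 1)).mulVecLin (T x) := by
    intro x
    ext i
    have e1 : (N ^ (i : ℕ)) (N x) = (N ^ ((i : ℕ) + 1)) x := by
      rw [pow_succ]; rfl
    rw [jN_apply, hTa, e1]
    split_ifs with h
    · rw [hTa]
    · have : (i : ℕ) = t := by have := i.2; omega
      rw [this, h1]; simp
  let S : (Fin (t + 1) → k) →ₗ[k] V :=
    Fintype.linearCombination k (fun j : Fin (t + 1) => (N ^ (t - (j : ℕ))) v)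
  have hSa : ∀ a, S a = ∑ j : Fin (t + 1), a j • (N ^ (t - (j : ℕ))) v := fun a => rfl
  have hS : ∀ a, S ((jordanN k (t + 1)).mulVecLin a) = N (S a) := by
    intro a
    rw [hSa, hSa, Fin.sum_univ_castSucc, Fin.sum_univ_succ, map_add, map_sum, map_smul]
    have e0 : N ((N ^ (t - ((0 : Fin (t + 1)) : ℕ))) v) = 0 := by
      have : N ((N ^ t) v) = (N ^ (t + 1)) v := by rw [pow_succ']; rfl
      simp [this, h1]
    rw [e0, smul_zero, zero_add, jN_apply, dif_neg (by simp), zero_smul, add_zero]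
    apply Finset.sum_congr rfl
    intro j _
    have hj := j.2
    rw [jN_apply, dif_pos (by simp), map_smul]
    have e1 : N ((N ^ (t - ((j.succ : Fin (t + 1)) : ℕ))) v)
        = (N ^ (t - ((j.castSucc : Fin (t + 1)) : ℕ))) v := by
      have : t - ((j.castSucc : Fin (t + 1)) : ℕ) = t - ((j.succ : Fin (t + 1)) : ℕ) + 1 := by
        simp; omega
      rw [this, pow_succ']; rfl
    rw [e1]
    rfl
  have hU : ∀ a, T (S ((jordanN k (t + 1)).mulVecLin a))
      = (jordanN k (t + 1)).mulVecLin (T (S a)) := by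
    intro a; rw [hS, hT]
  have hinj : Function.Injective (T ∘ₗ S) := by
    rw [← LinearMap.ker_eq_bot]
    by_contra hne
    have := socle_mem k t (LinearMap.ker (T ∘ₗ S)) (by
      intro x hx
      rw [LinearMap.mem_ker, LinearMap.comp_apply] at hx ⊢
      rw [hU, hx, map_zero]) hne
    rw [LinearMap.mem_ker, LinearMap.comp_apply] at this
    have h3 := congrFun this 0
    have hS0 : S (Pi.single 0 1) = (N ^ t) v := by
      rw [hSa, Finset.sum_eq_single 0]
      · simp
      · intro b _ hb; simp [hb]
      · simp
    rw [hTa, hS0] at h3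
    exact hφ (by simpa using h3)
  let U := LinearEquiv.ofInjectiveEndo (T ∘ₗ S) hinj
  have hUa : ∀ a, U a = T (S a) := fun a => rfl
  refine ⟨T, S ∘ₗ U.symm.toLinearMap, hT, ?_, ?_⟩
  · intro a
    have : U.symm ((jordanN k (t + 1)).mulVecLin a)
        = (jordanN k (t + 1)).mulVecLin (U.symm a) := by
      apply U.injective
      rw [LinearEquiv.apply_symm_apply, hUa, hU, ← hUa, LinearEquiv.apply_symm_apply]
    simp only [LinearMap.comp_apply, LinearEquiv.coe_coe]
    rw [this, hS]
  · intro a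
    simp only [LinearMap.comp_apply, LinearEquiv.coe_coe]
    rw [← hUa, LinearEquiv.apply_symm_apply]

theorem nil_decomp (k : Type) [Field k] (p : ℕ) (d : ℕ) :
    ∀ (V : Type) [AddCommGroup V] [Module k V] [FiniteDimensional k V],
      Module.finrank k V = d → ∀ N : V →ₗ[k] V, N ^ p = 0 →
      ∃ (ι : Type) (_ : Fintype ι) (f : ι → Fin p)
        (e : V ≃ₗ[k] (∀ i : ι, Fin ((f i : ℕ) + 1) → k)),
        ∀ v : V, ∀ i, e (N v) i = (jordanN k ((f i : ℕ) + 1)).mulVecLin (e v i) := by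
  induction d using Nat.strong_induction_on with
  | _ d ih =>
  intro V _ _ _ hd N hN
  rcases subsingleton_or_nontrivial V with hV | hV
  · exact ⟨Empty, inferInstance, fun i => i.elim, LinearEquiv.ofSubsingleton _ _,
      fun v i => i.elim⟩
  · classical
    have hex : ∃ m, N ^ m = 0 := ⟨p, hN⟩
    obtain ⟨t, ht⟩ : ∃ t, Nat.find hex = t + 1 := by
      apply Nat.exists_eq_succ_of_ne_zero
      intro h0
      have := Nat.find_spec hex
      rw [h0, pow_zero] at this
      exact one_ne_zero this
    have h1 : N ^ (t + 1) = 0 := ht ▸ Nat.find_spec hex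
    have h2 : N ^ t ≠ 0 := Nat.find_min hex (by omega)
    have htp : t < p := by
      have := Nat.find_min' hex hN
      omega
    obtain ⟨T, S, hT, hS, hTS⟩ := split_step k V N t h1 h2
    let K := LinearMap.ker T
    have hK : ∀ x ∈ K, N x ∈ K := by
      intro x hx
      rw [LinearMap.mem_ker] at hx ⊢
      rw [hT, hx, map_zero]
    have hlt : Module.finrank k K < d := by
      rw [← hd]
      apply Submodule.finrank_lt
      intro hK
      have h3 : S 1 ∈ K := hK ▸ Submodule.mem_top
      rw [LinearMap.mem_ker, hTS] at h3
      exact one_ne_zero h3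
    have hNK : (N.restrict hK) ^ p = 0 := by
      rw [Module.End.pow_restrict]
      ext x
      simp [LinearMap.restrict_apply, hN]
    obtain ⟨ι, _, f, e, he⟩ := ih _ hlt K rfl (N.restrict hK) hNK
    let P : V →ₗ[k] K := (LinearMap.id - S ∘ₗ T).codRestrict K (by
      intro x
      simp [K, hTS])
    have hPa : ∀ x, (P x : V) = x - S (T x) := fun x => rfl
    let E : V ≃ₗ[k] (Fin (t + 1) → k) × K :=
      LinearEquiv.ofLinearMap (T.prod P) (S.coprod K.subtype)
        (by
          apply LinearMap.ext
          rintro ⟨a, b⟩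
          have hb : T (b : V) = 0 := b.2
          apply Prod.ext
          · simp [hTS, hb]
          · apply Subtype.ext
            simp [hPa, hTS, hb])
        (by
          ext x
          simp [hPa])
    let f' : Option ι → Fin p := fun o => o.elim ⟨t, htp⟩ f
    let e' : V ≃ₗ[k] (∀ i : Option ι, Fin ((f' i : ℕ) + 1) → k) :=
      E ≪≫ₗ ((LinearEquiv.refl k (Fin (t + 1) → k)).prodCongr e) ≪≫ₗ
        (LinearEquiv.piOptionEquivProd k
          (M := fun i : Option ι => Fin ((f' i : ℕ) + 1) → k)).symm
    have hn : ∀ v, e' v none = T v := fun v => rfl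
    have hs : ∀ v i, e' v (some i) = e (P v) i := fun v i => rfl
    refine ⟨Option ι, inferInstance, f', e', ?_⟩
    intro v i
    cases i with
    | none => rw [hn, hn]; exact hT v
    | some i =>
      rw [hs, hs]
      have : P (N v) = N.restrict hK (P v) := by
        apply Subtype.ext
        simp only [hPa, LinearMap.restrict_apply, hT, hS, map_sub]
      rw [this]
      exact he (P v) i

/-- Over an algebraically closed field `k` of characteristic `p > 0`:
(1) every nonzero finite-dimensional representation of `C_p` over `k` (given by an
endomorphism `g` with `g^p = 1`) is isomorphic, equivariantly, to a finite direct sum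
of copies of `L_1, …, L_p`;
(2) each `L_s` (`1 ≤ s ≤ p`) is indecomposable: it admits no splitting into two nonzero
`σ`-invariant submodules;
(3) `L_r ≅ L_s` (equivariantly) if and only if `r = s`.
In particular the `L_s`, `1 ≤ s ≤ p`, exhaust all isomorphism classes of indecomposable
finite-dimensional representations of `C_p` over `k`. -/
theorem stmt0 (p : ℕ) (hp : p.Prime) (k : Type) [Field k] [IsAlgClosed k] [CharP k p] :
    (∀ (V : Type) [AddCommGroup V] [Module k V] [FiniteDimensional k V], Nontrivial V →
      ∀ g : V →ₗ[k] V, g ^ p = 1 →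
        ∃ (n : ℕ) (_ : 0 < n) (f : Fin n → Fin p)
          (e : V ≃ₗ[k] (∀ i : Fin n, Fin ((f i : ℕ) + 1) → k)),
          ∀ v : V, e (g v) = fun i => sigmaL k ((f i : ℕ) + 1) (e v i))
    ∧ (∀ s : ℕ, 1 ≤ s → s ≤ p →
        ∀ W₁ W₂ : Submodule k (Fin s → k),
          (∀ x ∈ W₁, sigmaL k s x ∈ W₁) → (∀ x ∈ W₂, sigmaL k s x ∈ W₂) →
          W₁ ⊓ W₂ = ⊥ → W₁ ⊔ W₂ = ⊤ → W₁ = ⊥ ∨ W₂ = ⊥)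
    ∧ (∀ r s : ℕ, 1 ≤ r → r ≤ p → 1 ≤ s → s ≤ p →
        ((∃ e : (Fin r → k) ≃ₗ[k] (Fin s → k),
            ∀ v, e (sigmaL k r v) = sigmaL k s (e v)) ↔ r = s)) := by
  refine ⟨?_, ?_, ?_⟩
  · intro V _ _ _ hV g hg
    haveI := Fact.mk hp
    have hN : (g - 1) ^ p = 0 := by
      haveI : CharP (Module.End k V) p := charP_of_injective_algebraMap
        (FaithfulSMul.algebraMap_injective k (Module.End k V)) p
      have := sub_pow_char_of_commute (R := Module.End k V) (p := p) (Commute.one_right g)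
      rw [this, hg]; simp
    obtain ⟨ι, _, f, e, he⟩ := nil_decomp k p _ V rfl (g - 1) hN
    let c := Fintype.equivFin ι
    refine ⟨Fintype.card ι, ?_, fun i => f (c.symm i),
      e ≪≫ₗ LinearEquiv.piCongrLeft' k (fun i : ι => Fin ((f i : ℕ) + 1) → k) c, ?_⟩
    · rw [Fintype.card_pos_iff]
      by_contra h
      rw [not_nonempty_iff] at h
      obtain ⟨x, y, hxy⟩ := hV
      exact hxy (e.injective (Subsingleton.elim _ _))
    · intro v
      funext i
      have h1 : g v = v + (g - 1) v := by simp
      have h2 := he v (c.symm i)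
      rw [sigmaL_eq, h1]
      change e (v + (g - 1) v) (c.symm i) = e v (c.symm i) + _
      rw [map_add, Pi.add_apply, h2]
      rfl
  · intro s hs _ W₁ W₂ h1 h2 hinf _
    obtain ⟨t, rfl⟩ : ∃ t, s = t + 1 := ⟨s - 1, by omega⟩
    by_contra! hne
    have aux : ∀ W : Submodule k (Fin (t + 1) → k), (∀ x ∈ W, sigmaL k (t + 1) x ∈ W) →
        ∀ x ∈ W, (jordanN k (t + 1)).mulVecLin x ∈ W := by
      intro W hW x hx
      have := W.sub_mem (hW x hx) hx
      rwa [sigmaL_eq, add_sub_cancel_left] at this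
    have m1 := socle_mem k t W₁ (aux W₁ h1) hne.1
    have m2 := socle_mem k t W₂ (aux W₂ h2) hne.2
    have m : (Pi.single 0 1 : Fin (t + 1) → k) ∈ W₁ ⊓ W₂ := ⟨m1, m2⟩
    rw [hinf, Submodule.mem_bot] at m
    have := congrFun m 0
    simp at this
  · intro r s _ _ _ _
    constructor
    · rintro ⟨e, _⟩
      simpa using e.finrank_eq
    · rintro rfl
      exact ⟨LinearEquiv.refl _ _, fun v => rfl⟩
end

section
/- Let k be an algebraically closed field of characteristic p > 0. For every integer s with 1 ≤ s ≤ p−1, there is an isomorphism of representations of C_p over k: L_{p−1} ⊗ L_s ≅ L_{p−s} ⊕ (L_p)^{⊕(s−1)}, i.e., the direct sum of L_{p−s} with s−1 copies of L_p. -/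
section Helpers
open Finset

/-- In characteristic `p`, `(x - y)^(p-1) = ∑ x^i y^(p-1-i)`. -/
lemma aux_geom {k : Type} [Field k] (p : ℕ) (hp : p.Prime) [CharP k p]
    {R : Type} [CommRing R] [Algebra k R] (x y : R) :
    ∑ i ∈ range p, x ^ i * y ^ (p - 1 - i) = (x - y) ^ (p - 1) := by
  have : Fact p.Prime := ⟨hp⟩
  have key : ∑ i ∈ range p, (MvPolynomial.X 0 : MvPolynomial (Fin 2) k) ^ i *
      (MvPolynomial.X 1) ^ (p - 1 - i) = (MvPolynomial.X 0 - MvPolynomial.X 1) ^ (p - 1) := by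
    have hne : (MvPolynomial.X 0 - MvPolynomial.X 1 : MvPolynomial (Fin 2) k) ≠ 0 := by
      rw [sub_ne_zero]
      intro h
      have := (MvPolynomial.X_inj (R := k) (σ := Fin 2) 0 1).1 h
      exact absurd this (by decide)
    apply mul_right_cancel₀ hne
    rw [geom_sum₂_mul, ← pow_succ, Nat.sub_add_cancel hp.one_le, sub_pow_char]
  have := congrArg (MvPolynomial.aeval (R := k) ![x, y]) key
  simpa [map_sum] using this

lemma aux_rel {k : Type} [Field k] (p : ℕ) (hp : p.Prime) [CharP k p]
    {R : Type} [CommRing R] [Algebra k R] (s : ℕ) (hs1 : 1 ≤ s) (hs2 : s ≤ p - 1)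
    (a b t : R) (ht : t = a + b + a * b)
    (ha : a ^ (p - 1) = 0) (hb : b ^ s = 0) :
    t ^ p = 0 ∧ t ^ (p - s) * ∑ j ∈ range s, b ^ j * t ^ (s - 1 - j) = 0 := by
  have h1 : (b - t) ^ (p - 1) = 0 := by
    have : b - t = a * (-(1 + b)) := by rw [ht]; ring
    rw [this, mul_pow, ha, zero_mul]
  have hbp : ∀ n, s ≤ n → b ^ n = 0 := fun n hn => pow_eq_zero_of_le hn hb
  have h2 := aux_geom (k := k) p hp b t
  rw [h1] at h2
  constructor
  · have h3 := geom_sum₂_mul b t p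
    rw [h2, hbp p (by omega)] at h3
    simpa using h3.symm
  · rw [← h2, mul_sum]
    have hsub : range s ⊆ range p := range_subset_range.2 (by omega)
    rw [← sum_subset hsub]
    · refine sum_congr rfl fun j hj => ?_
      have hj' := mem_range.1 hj
      have : p - 1 - j = (p - s) + (s - 1 - j) := by omega
      rw [this, pow_add]; ring
    · intro j _ hj
      rw [hbp j (by simpa using hj), zero_mul]

/-- The map from the Jordan block of size `n` determined by a vector `x`. -/
noncomputable def blockMap {k : Type} [Field k] {V : Type} [AddCommGroup V] [Module k V]
    (T : Module.End k V) (n : ℕ) (x : V) : (Fin n → k) →ₗ[k] V :=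
  Fintype.linearCombination k (fun i : Fin n => (T ^ (n - 1 - (i : ℕ))) x)

lemma jordan_single {k : Type} [Field k] (n : ℕ) (j : Fin n) :
    (jordanN k n).mulVec (Pi.single j 1) =
      fun i : Fin n => if (i : ℕ) + 1 = (j : ℕ) then 1 else 0 := by
  ext i
  simp [jordanN]

lemma blockMap_comm {k : Type} [Field k] {V : Type} [AddCommGroup V] [Module k V]
    (T : Module.End k V) (n : ℕ) (x : V) (hx : (T ^ n) x = 0) (u : Fin n → k) :
    blockMap T n x (sigmaL k n u) = blockMap T n x u + T (blockMap T n x u) := by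
  suffices h : blockMap T n x ∘ₗ sigmaL k n = blockMap T n x + T ∘ₗ blockMap T n x from
    LinearMap.congr_fun h u
  refine LinearMap.pi_ext' fun j => LinearMap.ext_ring ?_
  simp only [LinearMap.comp_apply, LinearMap.add_apply, LinearMap.coe_single, sigmaL,
    Matrix.mulVecLin_apply, Matrix.add_mulVec, Matrix.one_mulVec, map_add, jordan_single]
  congr 1
  simp only [blockMap, Fintype.linearCombination_apply, Pi.single_apply, ite_smul, one_smul,
    zero_smul, sum_ite_eq', mem_univ, if_true, sum_ite_eq]
  rw [← Module.End.mul_apply, ← pow_succ']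
  rcases Nat.eq_zero_or_pos (j : ℕ) with h0 | h0
  · have : n - 1 - (j : ℕ) + 1 = n := by have := j.2; omega
    rw [this, hx]
    exact sum_eq_zero fun i _ => if_neg (by omega)
  · rw [sum_eq_single (⟨j - 1, by omega⟩ : Fin n)]
    · rw [if_pos (by simp only; omega)]
      have := j.2
      congr 2
      simp only
      omega
    · intro i _ hi
      apply if_neg
      intro h
      apply hi
      ext
      simp only
      omega
    · simp

lemma blockMap_mem_range {k : Type} [Field k] {V : Type} [AddCommGroup V] [Module k V]
    (T : Module.End k V) (n : ℕ) (hn : 0 < n) (x : V) :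
    blockMap T n x (Pi.single ⟨n - 1, by omega⟩ 1) = x := by
  simp [blockMap, Fintype.linearCombination_apply, Pi.single_apply, ite_smul]

lemma aux_main {k : Type} [Field k] (p : ℕ) (hp : p.Prime) [CharP k p]
    {R : Type} [CommRing R] [Algebra k R] (s : ℕ) (hs1 : 1 ≤ s) (hs2 : s ≤ p - 1)
    {V : Type} [AddCommGroup V] [Module k V] [FiniteDimensional k V]
    (ρ : R →ₐ[k] Module.End k V) (a b : R)
    (ha : a ^ (p - 1) = 0) (hb : b ^ s = 0) (v : V)
    (hv : Submodule.span k (Set.range fun ij : ℕ × ℕ => ρ (a ^ ij.1 * b ^ ij.2) v) = ⊤)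
    (hdim : Module.finrank k V = (p - 1) * s) :
    ∃ e : V ≃ₗ[k] ((Fin (p - s) → k) × (Fin (s - 1) → Fin p → k)),
      ∀ x, e (x + ρ (a + b + a * b) x) =
        (LinearMap.prodMap (sigmaL k (p - s))
          (LinearMap.pi fun i : Fin (s - 1) => (sigmaL k p) ∘ₗ LinearMap.proj i)) (e x) := by
  obtain ⟨t, ht⟩ : ∃ t, t = a + b + a * b := ⟨_, rfl⟩
  rw [← ht]
  obtain ⟨h1, h2⟩ := aux_rel (k := k) p hp s hs1 hs2 a b t ht ha hb
  set w : R := ∑ j ∈ range s, b ^ j * t ^ (s - 1 - j) with hw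
  let T := ρ t
  have hps : 0 < p - s := by have := hp.two_le; omega
  let f : ((Fin (p - s) → k) × (Fin (s - 1) → Fin p → k)) →ₗ[k] V :=
    LinearMap.coprod (blockMap T (p - s) (ρ w v))
      (LinearMap.lsum k (fun _ : Fin (s - 1) => Fin p → k) k
        (fun j => blockMap T p (ρ (b ^ (j : ℕ)) v)))
  have hf : ∀ u z, f (u, z) = blockMap T (p - s) (ρ w v) u +
      ∑ j : Fin (s - 1), blockMap T p (ρ (b ^ (j : ℕ)) v) (z j) := by
    intro u z
    simp [f, LinearMap.lsum_apply]
  have hcomm : ∀ y, f ((LinearMap.prodMap (sigmaL k (p - s))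
          (LinearMap.pi fun i : Fin (s - 1) => (sigmaL k p) ∘ₗ LinearMap.proj i)) y) =
        f y + T (f y) := by
    rintro ⟨u, z⟩
    rw [LinearMap.prodMap_apply, hf, hf, blockMap_comm]
    · simp only [LinearMap.pi_apply, LinearMap.comp_apply, LinearMap.proj_apply]
      have h9 : ∀ x, (T ^ p) x = 0 := by
        intro x
        simp only [T]
        rw [← map_pow, h1, map_zero, LinearMap.zero_apply]
      simp only [blockMap_comm T p _ (h9 _)]
      rw [sum_add_distrib, map_add, map_sum T]; abel
    · simp only [T]
      rw [← map_pow, ← Module.End.mul_apply, ← map_mul, h2, map_zero, LinearMap.zero_apply]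
  -- surjectivity
  let U := LinearMap.range f
  let P : Submodule k R := U.comap ((LinearMap.applyₗ v).comp ρ.toLinearMap)
  have hP : ∀ x, x ∈ P ↔ ρ x v ∈ U := fun x => Iff.rfl
  have hPt : ∀ x ∈ P, t * x ∈ P := by
    intro x hx
    rw [hP] at hx ⊢
    obtain ⟨y, hy⟩ := hx
    have := hcomm y
    rw [hy] at this
    have h3 : ρ (t * x) v = T (ρ x v) := by rw [map_mul]; rfl
    rw [h3, ← sub_eq_of_eq_add' this]
    exact U.sub_mem ⟨_, rfl⟩ ⟨y, hy⟩
  have hPtn : ∀ n, ∀ x ∈ P, t ^ n * x ∈ P := by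
    intro n x hx
    induction n with
    | zero => simpa using hx
    | succ n ih => rw [pow_succ', mul_assoc]; exact hPt _ ih
  have hPw : w ∈ P := by
    rw [hP]
    refine ⟨(Pi.single ⟨p - s - 1, by omega⟩ 1, 0), ?_⟩
    rw [hf, blockMap_mem_range T _ hps]
    simp
  have hPb0 : ∀ j, j < s - 1 → b ^ j ∈ P := by
    intro j hj
    rw [hP]
    refine ⟨(0, Pi.single ⟨j, hj⟩ (Pi.single ⟨p - 1, by have := hp.one_le; omega⟩ 1)), ?_⟩
    rw [hf, map_zero, zero_add, sum_eq_single (⟨j, hj⟩ : Fin (s - 1))]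
    · rw [Pi.single_eq_same, blockMap_mem_range T _ hp.pos]
    · intro i _ hi
      rw [Pi.single_eq_of_ne hi, map_zero]
    · simp
  have hPb : ∀ j, b ^ j ∈ P := by
    intro j
    rcases lt_trichotomy j (s - 1) with h | h | h
    · exact hPb0 j h
    · obtain ⟨m, rfl⟩ : ∃ m, s = m + 1 := ⟨s - 1, by omega⟩
      have h4 : b ^ m = w - ∑ j ∈ range m, t ^ (m - j) * b ^ j := by
        rw [hw, sum_range_succ]
        simp [mul_comm]
      simp only [Nat.add_sub_cancel] at h
      rw [h, h4]
      refine P.sub_mem hPw (P.sum_mem fun i hi => hPtn _ _ (hPb0 i ?_))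
      have := mem_range.1 hi
      omega
    · rw [pow_eq_zero_of_le (by omega) hb]; exact P.zero_mem
  -- `Q` is the set of elements all of whose `b`-multiples and `t`-multiples are in `P`
  have hQ : ∀ i j l, (t ^ i * a ^ l) * b ^ j ∈ P := by
    have hc : a = (t - b) * ∑ i ∈ range s, (-b) ^ i := by
      have h5 := geom_sum_mul_neg (-b) s
      rw [neg_pow b s, hb, mul_zero, sub_zero] at h5
      calc a = a * ((∑ i ∈ range s, (-b) ^ i) * (1 - -b)) := by rw [h5, mul_one]
        _ = _ := by rw [ht]; ring
    intro i j l
    induction l generalizing i j with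
    | zero => rw [pow_zero, mul_one]; exact hPtn _ _ (hPb j)
    | succ l ih =>
      have h6 : (t ^ i * a ^ (l + 1)) * b ^ j =
          ∑ m ∈ range s, ((-1 : k) ^ m) • ((t ^ (i + 1) * a ^ l) * b ^ (j + m) -
            (t ^ i * a ^ l) * b ^ (j + m + 1)) := by
        rw [pow_succ a]
        nth_rw 2 [hc]
        rw [mul_sum, mul_sum, mul_sum, sum_mul]
        refine sum_congr rfl fun m _ => ?_
        rw [Algebra.smul_def, map_pow, map_neg, map_one, neg_pow b m]
        ring
      rw [h6]
      exact P.sum_mem fun m _ => P.smul_mem _ (P.sub_mem (ih _ _) (ih _ _))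
  have hsurj : Function.Surjective f := by
    rw [← LinearMap.range_eq_top, eq_top_iff, ← hv, Submodule.span_le]
    rintro _ ⟨⟨i, j⟩, rfl⟩
    have := hQ 0 j i
    rw [pow_zero, one_mul] at this
    exact this
  have hd : Module.finrank k ((Fin (p - s) → k) × (Fin (s - 1) → Fin p → k)) =
      Module.finrank k V := by
    rw [hdim, Module.finrank_prod, Module.finrank_fin_fun, Module.finrank_pi_fintype]
    simp only [Module.finrank_fin_fun, sum_const, card_univ, Fintype.card_fin, smul_eq_mul]
    obtain ⟨m, rfl⟩ : ∃ m, s = m + 1 := ⟨s - 1, by omega⟩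
    obtain ⟨q, rfl⟩ : ∃ q, p = m + 1 + q := ⟨p - (m + 1), by omega⟩
    have e1 : m + 1 + q - (m + 1) = q := by omega
    have e2 : m + 1 + q - 1 = m + q := by omega
    rw [e1, e2, Nat.add_sub_cancel]
    ring
  have hinj : Function.Injective f :=
    (LinearMap.injective_iff_surjective_of_finrank_eq_finrank hd).2 hsurj
  let e := (LinearEquiv.ofBijective f ⟨hinj, hsurj⟩)
  refine ⟨e.symm, fun x => ?_⟩
  rw [LinearEquiv.symm_apply_eq]
  have h7 := hcomm (e.symm x)
  have h8 : f (e.symm x) = x := e.apply_symm_apply x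
  rw [h8] at h7
  exact h7.symm

open scoped IsMulCommutative in
lemma aux_main2 {k : Type} [Field k] (p : ℕ) (hp : p.Prime) [CharP k p]
    (s : ℕ) (hs1 : 1 ≤ s) (hs2 : s ≤ p - 1)
    {V : Type} [AddCommGroup V] [Module k V] [FiniteDimensional k V]
    (A B : Module.End k V) (hAB : A * B = B * A)
    (hA : A ^ (p - 1) = 0) (hB : B ^ s = 0) (v : V)
    (hv : Submodule.span k (Set.range fun ij : ℕ × ℕ => (A ^ ij.1) ((B ^ ij.2) v)) = ⊤)
    (hdim : Module.finrank k V = (p - 1) * s) :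
    ∃ e : V ≃ₗ[k] ((Fin (p - s) → k) × (Fin (s - 1) → Fin p → k)),
      ∀ x, e (x + (A x + B x + A (B x))) =
        (LinearMap.prodMap (sigmaL k (p - s))
          (LinearMap.pi fun i : Fin (s - 1) => (sigmaL k p) ∘ₗ LinearMap.proj i)) (e x) := by
  have hcomm : ∀ x ∈ ({A, B} : Set (Module.End k V)), ∀ y ∈ ({A, B} : Set (Module.End k V)),
      x * y = y * x := by
    rintro x (rfl | rfl) y (rfl | rfl)
    · rfl
    · exact hAB
    · exact hAB.symm
    · rfl
  have hmc := Algebra.isMulCommutative_adjoin k hcomm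
  let a : Algebra.adjoin k ({A, B} : Set (Module.End k V)) :=
    ⟨A, Algebra.subset_adjoin (by simp)⟩
  let b : Algebra.adjoin k ({A, B} : Set (Module.End k V)) :=
    ⟨B, Algebra.subset_adjoin (by simp)⟩
  exact aux_main (k := k) p hp s hs1 hs2
    (Algebra.adjoin k ({A, B} : Set (Module.End k V))).val a b
    (Subtype.ext hA) (Subtype.ext hB) v hv hdim

lemma jordan_pow_single {k : Type} [Field k] (n : ℕ) (hn : 0 < n) (i : ℕ) :
    ((jordanN k n).mulVecLin ^ i) (Pi.single ⟨n - 1, by omega⟩ 1) =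
      fun l : Fin n => if (l : ℕ) + i + 1 = n then 1 else 0 := by
  induction i with
  | zero =>
    ext l
    have : (l = ⟨n - 1, by omega⟩) ↔ (l : ℕ) + 0 + 1 = n := by
      rw [Fin.ext_iff]; simp only; omega
    simp [Pi.single_apply, this]
  | succ i ih =>
    rw [pow_succ', Module.End.mul_apply, ih]
    ext l
    simp only [Matrix.mulVecLin_apply, Matrix.mulVec, dotProduct, jordanN, Matrix.of_apply,
      ite_mul, one_mul, zero_mul]
    by_cases h : (l : ℕ) + (i + 1) + 1 = n
    · rw [if_pos h, sum_eq_single (⟨l + 1, by omega⟩ : Fin n)]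
      · rw [if_pos (by simp), if_pos (by simp only; omega)]
      · intro m _ hm
        apply if_neg
        intro h'
        exact hm (Fin.ext h'.symm)
      · simp
    · rw [if_neg h]
      refine sum_eq_zero fun m _ => ?_
      split_ifs <;> first | rfl | omega

lemma jordan_pow_last {k : Type} [Field k] (n : ℕ) (j : Fin n) :
    ((jordanN k n).mulVecLin ^ (n - 1 - (j : ℕ))) (Pi.single ⟨n - 1, by have := j.2; omega⟩ 1) =
      Pi.single j 1 := by
  have hj := j.2
  rw [jordan_pow_single n (by omega)]
  ext l
  simp only [Pi.single_apply, Fin.ext_iff]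
  have : ((l : ℕ) + (n - 1 - (j : ℕ)) + 1 = n) ↔ ((l : ℕ) = j) := by omega
  simp [this]

lemma jordan_nilp {k : Type} [Field k] (n : ℕ) : (jordanN k n).mulVecLin ^ n = 0 := by
  refine LinearMap.pi_ext' fun j => LinearMap.ext_ring ?_
  have hj := j.2
  simp only [LinearMap.comp_apply, LinearMap.coe_single, LinearMap.zero_apply]
  rw [← jordan_pow_last, ← Module.End.mul_apply, ← pow_add, jordan_pow_single n (by omega)]
  ext l
  rw [if_neg (by omega)]
  rfl

end Helpers

open scoped TensorProduct in
theorem stmt4 (p : ℕ) (hp : p.Prime) (k : Type) [Field k] [IsAlgClosed k] [CharP k p]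
    (s : ℕ) (hs1 : 1 ≤ s) (hs2 : s ≤ p - 1) :
    ∃ e : TensorProduct k (Fin (p - 1) → k) (Fin s → k) ≃ₗ[k]
        ((Fin (p - s) → k) × (Fin (s - 1) → Fin p → k)),
      ∀ x, e (TensorProduct.map (sigmaL k (p - 1)) (sigmaL k s) x) =
        (LinearMap.prodMap (sigmaL k (p - s))
          (LinearMap.pi fun i : Fin (s - 1) => (sigmaL k p) ∘ₗ LinearMap.proj i)) (e x) := by
  let M := (jordanN k (p - 1)).mulVecLin
  let N := (jordanN k s).mulVecLin
  let A : Module.End k (TensorProduct k (Fin (p - 1) → k) (Fin s → k)) :=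
    TensorProduct.map M LinearMap.id
  let B : Module.End k (TensorProduct k (Fin (p - 1) → k) (Fin s → k)) :=
    TensorProduct.map LinearMap.id N
  have hAB : A * B = TensorProduct.map M N := by
    apply TensorProduct.ext'
    intro x y
    simp [A, B]
  have hBA : B * A = TensorProduct.map M N := by
    apply TensorProduct.ext'
    intro x y
    simp [A, B]
  have hAp : ∀ i x y, (A ^ i) (x ⊗ₜ[k] y) = ((M ^ i) x) ⊗ₜ[k] y := by
    intro i x y
    induction i with
    | zero => simp
    | succ i ih => rw [pow_succ', pow_succ', Module.End.mul_apply, ih]; simp [A]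
  have hBp : ∀ i x y, (B ^ i) (x ⊗ₜ[k] y) = x ⊗ₜ[k] ((N ^ i) y) := by
    intro i x y
    induction i with
    | zero => simp
    | succ i ih => rw [pow_succ', pow_succ', Module.End.mul_apply, ih]; simp [B]
  have hp2 := hp.two_le
  have ha : A ^ (p - 1) = 0 := by
    apply TensorProduct.ext'
    intro x y
    rw [hAp, jordan_nilp]
    simp
  have hb : B ^ s = 0 := by
    apply TensorProduct.ext'
    intro x y
    rw [hBp, jordan_nilp]
    simp
  have hdim : Module.finrank k (TensorProduct k (Fin (p - 1) → k) (Fin s → k)) = (p - 1) * s := by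
    simp
  obtain ⟨e, he⟩ := aux_main2 (k := k) p hp s hs1 hs2 A B (hAB.trans hBA.symm) ha hb
    ((Pi.single ⟨p - 1 - 1, by omega⟩ 1) ⊗ₜ[k] (Pi.single ⟨s - 1, by omega⟩ 1)) (by
      rw [eq_top_iff, ← ((Pi.basisFun k (Fin (p - 1))).tensorProduct
        (Pi.basisFun k (Fin s))).span_eq, Submodule.span_le]
      rintro _ ⟨⟨i, j⟩, rfl⟩
      apply Submodule.subset_span
      refine ⟨(p - 1 - 1 - i, s - 1 - j), ?_⟩
      rw [Module.Basis.tensorProduct_apply, Pi.basisFun_apply, Pi.basisFun_apply]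
      change (A ^ (p - 1 - 1 - (i : ℕ))) ((B ^ (s - 1 - (j : ℕ))) _) = _
      rw [hBp, hAp, jordan_pow_last, jordan_pow_last]) hdim
  refine ⟨e, fun x => ?_⟩
  rw [← he]
  congr 1
  change _ = x + (A + B + A * B) x
  have : TensorProduct.map (sigmaL k (p - 1)) (sigmaL k s) = 1 + (A + B + A * B) := by
    rw [hAB]
    apply TensorProduct.ext'
    intro x y
    simp only [sigmaL, TensorProduct.map_tmul, Matrix.mulVecLin_apply, Matrix.add_mulVec,
      Matrix.one_mulVec, TensorProduct.add_tmul, TensorProduct.tmul_add, A, B, M, N,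
      LinearMap.add_apply, Module.End.one_apply, LinearMap.id_apply]
    abel
  rw [this]
  rfl
end

section
/- Let k be an algebraically closed field of characteristic p > 0, and let r, s be integers with 1 ≤ r, s ≤ p−1. Set c = min(r, s, p−r, p−s) and m = (r·s − c·|r−s| − c²)/p. Then there is an isomorphism of representations of C_p over k: L_r ⊗ L_s ≅ (⨁_{i=1}^{c} L_{|r−s|+2i−1}) ⊕ (L_p)^{⊕ m}. -/
open Finset


section abs
variable {k V : Type*} [Field k] [AddCommGroup V] [Module k V]

theorem tt_li (X Y : Module.End k V) (hXY : Commute X Y) (v : V) (r s : ℕ)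
    (hX : X ^ r = 0) (hY : Y ^ s = 0) (hv : (X ^ (r-1) * Y ^ (s-1)) v ≠ 0) :
    LinearIndependent k (fun x : Fin r × Fin s => (X ^ (x.1 : ℕ) * Y ^ (x.2 : ℕ)) v) := by
  rw [Fintype.linearIndependent_iff]
  intro g hg
  have key : ∀ n : ℕ, ∀ x : Fin r × Fin s, (x.1 : ℕ) + x.2 = n → g x = 0 := by
    intro n
    induction n using Nat.strong_induction_on with
    | _ n ih =>
      intro x hx
      have h2 := congrArg (X ^ (r - 1 - (x.1 : ℕ)) * Y ^ (s - 1 - (x.2 : ℕ))) hg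
      rw [map_zero, map_sum, Finset.sum_eq_single x] at h2
      · rw [map_smul, ← Module.End.mul_apply] at h2
        have e : X ^ (r - 1 - (x.1 : ℕ)) * Y ^ (s - 1 - (x.2 : ℕ)) * (X ^ (x.1 : ℕ) * Y ^ (x.2 : ℕ))
            = X ^ (r-1) * Y ^ (s-1) := by
          rw [mul_assoc, ← mul_assoc (Y ^ _), ((hXY.symm.pow_pow _ _)).eq, mul_assoc, ← mul_assoc,
            ← pow_add, ← pow_add]
          congr 2 <;> omega
        rw [e] at h2
        exact (smul_eq_zero.mp h2).resolve_right hv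
      · intro y _ hy
        by_cases h3 : (y.1 : ℕ) + y.2 < n
        · rw [ih _ h3 y rfl]; simp
        · have e : X ^ (r - 1 - (x.1 : ℕ)) * Y ^ (s - 1 - (x.2 : ℕ)) * (X ^ (y.1 : ℕ) * Y ^ (y.2 : ℕ))
              = 0 := by
            rw [mul_assoc, ← mul_assoc (Y ^ _), ((hXY.symm.pow_pow _ _)).eq, mul_assoc, ← mul_assoc,
              ← pow_add, ← pow_add]
            have h4 : (x.1 : ℕ) < y.1 ∨ (x.2 : ℕ) < y.2 := by
              by_contra hcon
              push Not at hcon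
              apply hy
              ext <;> omega
            rcases h4 with h4 | h4
            · rw [pow_eq_zero_of_le (show r ≤ _ by omega) hX, zero_mul]
            · rw [pow_eq_zero_of_le (show s ≤ s - 1 - (x.2 : ℕ) + y.2 by omega) hY, mul_zero]
          rw [map_smul, ← Module.End.mul_apply, e]; simp
      · simp
  intro x
  exact key _ x rfl

/-- Jordan criterion -/
theorem jordan_crit {ι : Type*} [Fintype ι] {k : Type} {V : Type*} [Field k] [AddCommGroup V] [Module k V]
    [FiniteDimensional k V]
    (N : V →ₗ[k] V) (n : ι → ℕ) (v : ι → V) (hn : ∀ i, 1 ≤ n i)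
    (h0 : ∀ i, (N ^ (n i)) (v i) = 0)
    (hli : LinearIndependent k (fun i => (N ^ (n i - 1)) (v i)))
    (hdim : Module.finrank k V = ∑ i, n i) :
    ∃ g : (∀ i, Fin (n i) → k) ≃ₗ[k] V, ∀ f, g (fun i => sigmaL k (n i) (f i)) = g f + N (g f) := by
  classical
  let g : (∀ i, Fin (n i) → k) →ₗ[k] V :=
    ∑ i, (Fintype.linearCombination k (fun j : Fin (n i) => (N ^ (n i - 1 - (j:ℕ))) (v i))) ∘ₗ
      LinearMap.proj i
  have hg : ∀ f, g f = ∑ i, ∑ j : Fin (n i), f i j • (N ^ (n i - 1 - (j:ℕ))) (v i) := by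
    intro f
    simp [g, Fintype.linearCombination_apply]
  let T : (∀ i, Fin (n i) → k) → (∀ i, Fin (n i) → k) :=
    fun f i j => if h : (j : ℕ) + 1 < n i then f i ⟨j + 1, h⟩ else 0
  have hsig : ∀ f, (fun i => sigmaL k (n i) (f i)) = f + T f := by
    intro f
    ext i j
    simp only [sigmaL, Matrix.mulVecLin_apply, Matrix.add_mulVec, Matrix.one_mulVec, Pi.add_apply, T]
    congr 1
    simp only [jordanN, Matrix.mulVec, dotProduct, Matrix.of_apply, ite_mul, one_mul, zero_mul]
    split_ifs with h
    · rw [Finset.sum_eq_single ⟨j+1, h⟩]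
      · simp
      · intro b _ hb
        rw [if_neg]
        intro h; apply hb; ext; simp [h]
      · simp
    · apply Finset.sum_eq_zero
      intro b _
      rw [if_neg]
      have := b.2
      omega
  have hgT : ∀ f, g (T f) = N (g f) := by
    intro f
    rw [hg, hg, map_sum]
    apply Finset.sum_congr rfl
    intro i _
    rw [map_sum]
    obtain ⟨q, hq⟩ : ∃ q, n i = q + 1 := ⟨n i - 1, by have := hn i; omega⟩
    have hz := h0 i
    -- turn into sums over range
    let F : ℕ → k := fun j => if h : j < n i then f i ⟨j, h⟩ else 0
    have e1 : ∑ j : Fin (n i), T f i j • (N ^ (n i - 1 - (j:ℕ))) (v i)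
        = ∑ j ∈ range (n i), F (j+1) • (N ^ (n i - 1 - j)) (v i) := by
      rw [← Fin.sum_univ_eq_sum_range (fun j => F (j+1) • (N ^ (n i - 1 - j)) (v i))]
    have e2 : ∑ j : Fin (n i), N (f i j • (N ^ (n i - 1 - (j:ℕ))) (v i))
        = ∑ j ∈ range (n i), F j • (N ^ (n i - j)) (v i) := by
      rw [← Fin.sum_univ_eq_sum_range (fun j => F j • (N ^ (n i - j)) (v i))]
      apply Finset.sum_congr rfl
      intro j _
      have hj := j.2
      simp only [F, hj, dif_pos, map_smul]
      congr 1
      rw [← Module.End.mul_apply, ← pow_succ']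
      congr 2
      omega
    rw [e1, e2]
    have hF : F (q+1) = 0 := by simp [F, hq]
    rw [hq] at hz ⊢
    rw [Finset.sum_range_succ, Finset.sum_range_succ', hF]
    simp only [zero_smul, add_zero, Nat.sub_zero, hz, smul_zero]
    apply Finset.sum_congr rfl
    intro j _
    congr 3
    omega
  have hinj : ∀ q : ℕ, ∀ f, g f = 0 → (∀ i (j : Fin (n i)), q ≤ (j : ℕ) → f i j = 0) → f = 0 := by
    intro q
    induction q with
    | zero => intro f _ h; ext i j; simpa using h i j (Nat.zero_le _)
    | succ q ih =>
      intro f hf h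
      have hT : T f = 0 := by
        apply ih
        · rw [hgT, hf, map_zero]
        · intro i j hj
          simp only [T]
          split_ifs with h'
          · apply h; simp; omega
          · rfl
      have hf1 : ∀ i (j : Fin (n i)), 1 ≤ (j:ℕ) → f i j = 0 := by
        intro i j hj
        have := congrFun (congrFun hT i) ⟨j - 1, by omega⟩
        simp only [T] at this
        rw [dif_pos (by have := j.2; omega)] at this
        rw [show (0 : ∀ i, Fin (n i) → k) i ⟨j - 1, by omega⟩ = 0 from rfl] at this
        rw [← this]
        congr 1
        ext; simp; omega
      rw [hg] at hf
      have e : ∀ i, ∑ j : Fin (n i), f i j • (N ^ (n i - 1 - (j:ℕ))) (v i)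
          = f i ⟨0, hn i⟩ • (N ^ (n i - 1)) (v i) := by
        intro i
        rw [Finset.sum_eq_single ⟨0, hn i⟩]
        · simp
        · intro j _ hj
          rw [hf1 i j, zero_smul]
          by_contra h'
          apply hj; ext; simp; omega
        · simp
      simp only [e] at hf
      have := Fintype.linearIndependent_iff.mp hli _ hf
      ext i j
      by_cases hj : 1 ≤ (j:ℕ)
      · exact hf1 i j hj
      · rw [show j = ⟨0, hn i⟩ by ext; simp; omega]
        exact this i
  have hinj' : Function.Injective g := by
    rw [← LinearMap.ker_eq_bot, LinearMap.ker_eq_bot']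
    intro f hf
    apply hinj (∑ i, n i) f hf
    intro i j hj
    have := j.2
    have := Finset.single_le_sum (f := n) (fun _ _ => Nat.zero_le _) (Finset.mem_univ i)
    omega
  refine ⟨LinearMap.linearEquivOfInjective g hinj' ?_, ?_⟩
  · rw [hdim, Module.finrank_pi_fintype]; simp
  · intro f
    simp only [LinearMap.linearEquivOfInjective_apply]
    rw [hsig, map_add, hgT]
end abs
section graded
variable {k V : Type*} [Field k] [AddCommGroup V] [Module k V]

theorem F_pow_t (F : V →ₗ[k] V) (t : ℕ → ℕ → V)
    (hF : ∀ a b, F (t a b) = t (a+1) b + t a (b+1)) (a b n : ℕ) :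
    (F ^ n) (t a b) = ∑ ij ∈ antidiagonal n, n.choose ij.1 • t (a + ij.1) (b + ij.2) := by
  induction n with
  | zero => simp
  | succ n ih =>
    rw [pow_succ', Module.End.mul_apply, ih,
      Finset.sum_antidiagonal_choose_succ_nsmul (fun i j => t (a + i) (b + j)), map_sum,
      ← Finset.sum_add_distrib]
    apply Finset.sum_congr rfl
    intro x hx
    rw [Finset.HasAntidiagonal.mem_antidiagonal] at hx
    rw [map_nsmul, hF, nsmul_add, add_comm, show n.choose x.2 = n.choose x.1 from by
      rw [← hx]; exact (Nat.choose_symm_add).symm]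
    rfl

theorem coord_t (t : ℕ → ℕ → V) (r s : ℕ) (h0r : ∀ a b, r ≤ a → t a b = 0)
    (h0s : ∀ a b, s ≤ b → t a b = 0) (B : Module.Basis (Fin r × Fin s) k V)
    (hB : ∀ x, B x = t x.1 x.2) (x : Fin r × Fin s) (a b : ℕ) :
    B.coord x (t a b) = if a = x.1 ∧ b = x.2 then 1 else 0 := by
  by_cases ha : a < r
  · by_cases hb : b < s
    · have := hB (⟨a, ha⟩, ⟨b, hb⟩)
      simp only at this
      rw [← this, Module.Basis.coord_apply, Module.Basis.repr_self, Finsupp.single_apply]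
      congr 1
      rw [Prod.ext_iff, Fin.ext_iff, Fin.ext_iff]
    · rw [h0s a b (by omega), map_zero, if_neg]
      have := x.2.2
      omega
  · rw [h0r a b (by omega), map_zero, if_neg]
    have := x.1.2
    omega

/-- graded pieces -/
def Wd (k : Type*) {V : Type*} [Field k] [AddCommGroup V] [Module k V] (t : ℕ → ℕ → V) (D : ℕ) :
    Submodule k V :=
  Submodule.span k {v | ∃ a b, a + b = D ∧ v = t a b}

theorem t_mem (t : ℕ → ℕ → V) (a b D : ℕ) (h : a + b = D) : t a b ∈ Wd k t D :=
  Submodule.subset_span ⟨a, b, h, rfl⟩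

theorem F_mem (F : V →ₗ[k] V) (t : ℕ → ℕ → V)
    (hF : ∀ a b, F (t a b) = t (a+1) b + t a (b+1)) (D : ℕ) (u : V) (hu : u ∈ Wd k t D) :
    F u ∈ Wd k t (D+1) := by
  have : Wd k t D ≤ (Wd k t (D+1)).comap F := by
    apply Submodule.span_le.mpr
    rintro _ ⟨a, b, h, rfl⟩
    simp only [Submodule.comap_coe, Set.mem_preimage, SetLike.mem_coe]
    rw [hF]
    exact add_mem (t_mem _ _ _ _ (by omega)) (t_mem _ _ _ _ (by omega))
  exact this hu

theorem Fpow_mem (F : V →ₗ[k] V) (t : ℕ → ℕ → V)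
    (hF : ∀ a b, F (t a b) = t (a+1) b + t a (b+1)) (D : ℕ) (u : V) (hu : u ∈ Wd k t D) (n : ℕ) :
    (F ^ n) u ∈ Wd k t (D+n) := by
  induction n with
  | zero => simpa using hu
  | succ n ih =>
    rw [pow_succ', Module.End.mul_apply]
    exact F_mem F t hF _ _ ih

theorem coord_W (t : ℕ → ℕ → V) (r s : ℕ) (h0r : ∀ a b, r ≤ a → t a b = 0)
    (h0s : ∀ a b, s ≤ b → t a b = 0) (B : Module.Basis (Fin r × Fin s) k V)
    (hB : ∀ x, B x = t x.1 x.2) (x : Fin r × Fin s) (D : ℕ) (u : V) (hu : u ∈ Wd k t D)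
    (hx : (x.1 : ℕ) + x.2 ≠ D) : B.coord x u = 0 := by
  have : Wd k t D ≤ LinearMap.ker (B.coord x) := by
    apply Submodule.span_le.mpr
    rintro _ ⟨a, b, h, rfl⟩
    simp only [SetLike.mem_coe, LinearMap.mem_ker]
    rw [coord_t t r s h0r h0s B hB, if_neg]
    omega
  exact this hu

theorem W_li {ι : Type*} [Fintype ι] (t : ℕ → ℕ → V) (r s : ℕ) (h0r : ∀ a b, r ≤ a → t a b = 0)
    (h0s : ∀ a b, s ≤ b → t a b = 0) (B : Module.Basis (Fin r × Fin s) k V)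
    (hB : ∀ x, B x = t x.1 x.2) (D : ι → ℕ) (hD : Function.Injective D) (u : ι → V)
    (hu : ∀ i, u i ∈ Wd k t (D i)) (hu0 : ∀ i, u i ≠ 0) : LinearIndependent k u := by
  rw [Fintype.linearIndependent_iff]
  intro g hg i
  obtain ⟨x, hx⟩ : ∃ x, B.coord x (u i) ≠ 0 := by
    by_contra hcon
    push Not at hcon
    apply hu0 i
    exact B.forall_coord_eq_zero_iff.mp hcon
  have hxD : (x.1 : ℕ) + x.2 = D i := by
    by_contra h
    exact hx (coord_W t r s h0r h0s B hB x _ _ (hu i) h)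
  have := congrArg (B.coord x) hg
  rw [map_sum, Finset.sum_eq_single i] at this
  · rw [map_smul, map_zero, smul_eq_mul] at this
    exact (mul_eq_zero.mp this).resolve_right hx
  · intro j _ hj
    rw [map_smul, coord_W t r s h0r h0s B hB x _ _ (hu j), smul_zero]
    intro h
    exact hj (hD (h.symm.trans hxD))
  · simp

/-- raising operator -/
theorem exists_E (t : ℕ → ℕ → V) (r s : ℕ) (h0r : ∀ a b, r ≤ a → t a b = 0)
    (h0s : ∀ a b, s ≤ b → t a b = 0) (B : Module.Basis (Fin r × Fin s) k V)
    (hB : ∀ x, B x = t x.1 x.2) :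
    ∃ E : V →ₗ[k] V, ∀ a b, E (t a b) = ((a : k) * (r - a)) • t (a-1) b +
      ((b : k) * (s - b)) • t a (b-1) := by
  refine ⟨B.constr k (fun x => ((x.1 : k) * (r - (x.1:ℕ))) • t (x.1-1) x.2 +
      (((x.2:ℕ) : k) * (s - (x.2:ℕ))) • t x.1 (x.2-1)), ?_⟩
  intro a b
  by_cases ha : a < r
  · by_cases hb : b < s
    · have := hB (⟨a, ha⟩, ⟨b, hb⟩)
      simp only at this
      rw [← this, Module.Basis.constr_basis]
    · rw [h0s a b (by omega), map_zero, h0s (a-1) b (by omega)]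
      by_cases hbs : b = s
      · simp [hbs]
      · rw [h0s a (b-1) (by omega)]; simp
  · rw [h0r a b (by omega), map_zero, h0r a (b-1) (by omega)]
    by_cases hbs : a = r
    · simp [hbs]
    · rw [h0r (a-1) b (by omega)]; simp

theorem EF_comm (E F : V →ₗ[k] V) (t : ℕ → ℕ → V) (r s : ℕ)
    (hF : ∀ a b, F (t a b) = t (a+1) b + t a (b+1))
    (hE : ∀ a b, E (t a b) = ((a : k) * (r - a)) • t (a-1) b + ((b : k) * (s - b)) • t a (b-1))
    (D : ℕ) (u : V) (hu : u ∈ Wd k t D) :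
    E (F u) = F (E u) + ((r : k) + s - 2 - 2 * D) • u := by
  have : Wd k t D ≤ LinearMap.eqLocus (E ∘ₗ F) (F ∘ₗ E + ((r : k) + s - 2 - 2 * D) • LinearMap.id) := by
    apply Submodule.span_le.mpr
    rintro _ ⟨a, b, h, rfl⟩
    simp only [SetLike.mem_coe, LinearMap.mem_eqLocus, LinearMap.comp_apply, LinearMap.add_apply,
      LinearMap.smul_apply, LinearMap.id_apply]
    subst h
    rw [hF, hE, map_add, hE, hE, map_add, map_smul, map_smul, hF, hF]
    rcases a with _ | a <;> rcases b with _ | b <;> simp <;> module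
  exact this hu

theorem E_inj (E : V →ₗ[k] V) (t : ℕ → ℕ → V) (r s p : ℕ) [CharP k p] (hp : p.Prime)
    (h0r : ∀ a b, r ≤ a → t a b = 0)
    (h0s : ∀ a b, s ≤ b → t a b = 0) (B : Module.Basis (Fin r × Fin s) k V)
    (hB : ∀ x, B x = t x.1 x.2) (hr : r < p)
    (hE : ∀ a b, E (t a b) = ((a : k) * (r - a)) • t (a-1) b + ((b : k) * (s - b)) • t a (b-1))
    (D : ℕ) (hD : s ≤ D) (u : V) (hu : u ∈ Wd k t D) (hEu : E u = 0) : u = 0 := by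
  have key : ∀ x : Fin r × Fin s, ∀ a b : ℕ, (x.1 : ℕ) = a + 1 → (x.2 : ℕ) = b → ∀ u ∈ Wd k t D, 
      ∀ y : Fin r × Fin s, (y.1 : ℕ) = a → (y.2 : ℕ) = b →
      B.coord y (E u) = ((a : k) + 1) * (r - (a + 1)) * B.coord x u + 
        ((b : k) + 1) * (s - (b+1)) * (if h : b + 1 < s then B.coord (y.1, ⟨b+1, h⟩) u else 0) := by
    intro x a b hxa hxb u hu y hya hyb
    induction hu using Submodule.span_induction with
    | zero => simp
    | add u v _ _ h1 h2 =>
      simp only [map_add, h1, h2]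
      split_ifs <;> ring
    | smul c u _ h1 =>
      simp only [map_smul, h1, smul_eq_mul]
      split_ifs <;> ring
    | mem v hv =>
      obtain ⟨a', b', h, rfl⟩ := hv
      simp only [hE, map_add, map_smul, coord_t t r s h0r h0s B hB, hxa, hxb, hya, hyb, smul_eq_mul]
      have hbs : ¬ (b + 1 < s) → (s : k) - (b + 1) = 0 := by
        intro h1
        have := y.2.2
        rw [show s = b + 1 by omega]
        push_cast
        ring
      have e1 : (a' : k) * (r - a') * (if a' - 1 = a ∧ b' = b then 1 else 0) =
          ((a : k) + 1) * (r - (a + 1)) * (if a' = a + 1 ∧ b' = b then 1 else 0) := by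
        rcases a' with _ | a'
        · simp
        · simp only [Nat.add_sub_cancel, Nat.add_right_cancel_iff]
          split_ifs with h1
          · rw [h1.1]; push_cast; ring
          · simp
      have e2 : (b' : k) * (s - b') * (if a' = a ∧ b' - 1 = b then 1 else 0) =
          ((b : k) + 1) * (s - (b + 1)) * (if a' = a ∧ b' = b + 1 then 1 else 0) := by
        rcases b' with _ | b'
        · simp
        · simp only [Nat.add_sub_cancel, Nat.add_right_cancel_iff]
          split_ifs with h1
          · rw [h1.2]; push_cast; ring
          · simp
      rw [e1, e2]
      by_cases hb : b + 1 < s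
      · simp [hb]
      · simp [hb, hbs hb]
  have hz : ∀ a : ℕ, ∀ x : Fin r × Fin s, (x.1 : ℕ) = a → B.coord x u = 0 := by
    intro a
    induction a with
    | zero =>
      intro x hx
      apply coord_W t r s h0r h0s B hB x D u hu
      have := x.2.2
      omega
    | succ a ih =>
      intro x hx
      have hxr := x.1.2
      have h1 := key x a x.2 hx rfl u hu (⟨a, by omega⟩, x.2) rfl rfl
      rw [hEu, map_zero] at h1
      have h2 : (if h : (x.2 : ℕ) + 1 < s then
          B.coord ((⟨a, by omega⟩ : Fin r), (⟨(x.2 : ℕ)+1, h⟩ : Fin s)) u else 0) = 0 := by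
        split_ifs with h
        · exact ih _ rfl
        · rfl
      simp only at h1
      rw [h2, mul_zero, add_zero] at h1
      have c1 : ((a : k) + 1) ≠ 0 := by
        have : ((a + 1 : ℕ) : k) ≠ 0 := by
          rw [Ne, CharP.cast_eq_zero_iff k p]
          exact Nat.not_dvd_of_pos_of_lt (by omega) (by omega)
        exact_mod_cast this
      have c2 : ((r : k) - (a + 1)) ≠ 0 := by
        have : ((r - (a + 1) : ℕ) : k) ≠ 0 := by
          rw [Ne, CharP.cast_eq_zero_iff k p]
          exact Nat.not_dvd_of_pos_of_lt (by omega) (by omega)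
        rw [Nat.cast_sub (by omega)] at this
        exact_mod_cast this
      have := h1.symm
      exact (mul_eq_zero.mp this).resolve_left (mul_ne_zero c1 c2)
  exact B.forall_coord_eq_zero_iff.mp (fun x => hz _ x rfl)
end graded
section strings
variable {k V : Type*} [Field k] [AddCommGroup V] [Module k V]

/-- coefficients of the primitive vector -/
def wco (k : Type*) [Field k] (r s i : ℕ) : ℕ → k
  | 0 => 1
  | a + 1 => - (((i : k) - a) * (s - (i - a))) / (((a : k) + 1) * (r - (a + 1))) * wco k r s i a

theorem cast_ne (p : ℕ) [CharP k p] (n : ℕ) (h1 : 0 < n) (h2 : n < p) : (n : k) ≠ 0 := by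
  rw [Ne, CharP.cast_eq_zero_iff k p]
  exact Nat.not_dvd_of_pos_of_lt h1 h2

theorem exists_prim (E : V →ₗ[k] V) (t : ℕ → ℕ → V) (r s p : ℕ) [CharP k p]
    (h0r : ∀ a b, r ≤ a → t a b = 0)
    (h0s : ∀ a b, s ≤ b → t a b = 0) (B : Module.Basis (Fin r × Fin s) k V)
    (hB : ∀ x, B x = t x.1 x.2) (hr : r < p)
    (hE : ∀ a b, E (t a b) = ((a : k) * (r - a)) • t (a-1) b + ((b : k) * (s - b)) • t a (b-1))
    (i : ℕ) (hi : i < r) (hrs : r ≤ s) : ∃ w ∈ Wd k t i, w ≠ 0 ∧ E w = 0 := by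
  refine ⟨∑ a ∈ range (i+1), wco k r s i a • t a (i - a), ?_, ?_, ?_⟩
  · apply Submodule.sum_mem
    intro a ha
    rw [Finset.mem_range] at ha
    exact Submodule.smul_mem _ _ (t_mem _ _ _ _ (by omega))
  · intro h
    have := congrArg (B.coord (⟨0, by omega⟩, ⟨i, by omega⟩)) h
    rw [map_sum, Finset.sum_eq_single 0] at this
    · rw [map_smul, coord_t t r s h0r h0s B hB] at this
      simp [wco] at this
    · intro a _ ha
      rw [map_smul, coord_t t r s h0r h0s B hB, if_neg (by simp [ha]), smul_zero]
    · simp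
  · rw [map_sum]
    simp only [map_smul, hE, smul_add, Finset.sum_add_distrib]
    rw [Finset.sum_range_succ', Finset.sum_range_succ (fun a => wco k r s i a • _)]
    simp only [Nat.cast_zero, zero_mul, zero_smul, smul_zero, add_zero, Nat.sub_self,
      ← Finset.sum_add_distrib]
    apply Finset.sum_eq_zero
    intro a ha
    rw [Finset.mem_range] at ha
    have c1 : ((a : k) + 1) ≠ 0 := by
      have := cast_ne (k := k) p (a+1) (by omega) (by omega)
      exact_mod_cast this
    have c2 : ((r : k) - (a + 1)) ≠ 0 := by
      have := cast_ne (k := k) p (r - (a+1)) (by omega) (by omega)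
      rw [Nat.cast_sub (by omega)] at this
      exact_mod_cast this
    rw [show i - a - 1 = i - (a+1) by omega, Nat.add_sub_cancel, smul_smul, smul_smul, ← add_smul,
      Nat.cast_sub (show a ≤ i by omega)]
    convert zero_smul k _
    simp only [wco]
    push_cast
    field_simp
    ring

theorem prim_string (E F : V →ₗ[k] V) (t : ℕ → ℕ → V) (r s p : ℕ) [CharP k p] (hp : p.Prime)
    (h0r : ∀ a b, r ≤ a → t a b = 0)
    (h0s : ∀ a b, s ≤ b → t a b = 0) (B : Module.Basis (Fin r × Fin s) k V)
    (hB : ∀ x, B x = t x.1 x.2) (hr : r < p)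
    (hF : ∀ a b, F (t a b) = t (a+1) b + t a (b+1))
    (hE : ∀ a b, E (t a b) = ((a : k) * (r - a)) • t (a-1) b + ((b : k) * (s - b)) • t a (b-1))
    (i n : ℕ) (hi : i < r) (hn : n + 2 * i + 2 = r + s) (hnp : n < p)
    (w : V) (hw : w ∈ Wd k t i) (hw0 : w ≠ 0) (hEw : E w = 0) :
    (F ^ n) w ≠ 0 ∧ (F ^ (n+1)) w = 0 := by
  have hnk : (r : k) + s = n + 2 * i + 2 := by exact_mod_cast congrArg (Nat.cast : ℕ → k) hn.symm
  have key : ∀ j : ℕ, E ((F ^ (j+1)) w) = (((j : k) + 1) * (n - j)) • (F ^ j) w := by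
    intro j
    induction j with
    | zero =>
      rw [pow_succ', Module.End.mul_apply, EF_comm E F t r s hF hE i _ (by simpa using hw)]
      simp only [pow_zero, Module.End.one_apply, hEw, map_zero, hnk]
      simp
    | succ j ih =>
      rw [pow_succ', Module.End.mul_apply, EF_comm E F t r s hF hE (i + (j+1)) _
        (Fpow_mem F t hF i w hw (j+1)), ih, hnk, map_smul, ← Module.End.mul_apply F, ← pow_succ',
        ← add_smul]
      congr 1
      push_cast
      ring
  constructor
  · have : ∀ j ≤ n, (F ^ j) w ≠ 0 := by
      intro j
      induction j with
      | zero => intro _; simpa using hw0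
      | succ j ih =>
        intro hj h
        have h1 := key j
        rw [h, map_zero] at h1
        have c1 := cast_ne (k := k) p (j+1) (by omega) (by omega)
        have c2 := cast_ne (k := k) p (n-j) (by omega) (by omega)
        rw [Nat.cast_sub (by omega)] at c2
        push_cast at c1
        exact (smul_ne_zero (mul_ne_zero c1 c2) (ih (by omega))) h1.symm
    exact this n le_rfl
  · apply E_inj E t r s p hp h0r h0s B hB hr hE (i + (n+1)) (by omega) _ (Fpow_mem F t hF i w hw _)
    rw [key]; simp

theorem top_string (F : V →ₗ[k] V) (t : ℕ → ℕ → V) (r s p : ℕ) [CharP k p] (hp : p.Prime)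
    (h0r : ∀ a b, r ≤ a → t a b = 0)
    (h0s : ∀ a b, s ≤ b → t a b = 0) (B : Module.Basis (Fin r × Fin s) k V)
    (hB : ∀ x, B x = t x.1 x.2) (hr : r < p) (hs : s < p)
    (hF : ∀ a b, F (t a b) = t (a+1) b + t a (b+1))
    (i : ℕ) (hi : i + p < r + s) :
    (F ^ (p-1)) (t i 0) ≠ 0 ∧ (F ^ p) (t i 0) = 0 := by
  constructor
  · intro h
    have := congrArg (B.coord (⟨r - 1, by omega⟩, ⟨p - r + i, by omega⟩)) h
    rw [F_pow_t F t hF, map_sum, Finset.sum_eq_single (r - 1 - i, p - r + i)] at this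
    · rw [map_nsmul, coord_t t r s h0r h0s B hB, if_pos (by simp; omega), map_zero] at this
      simp only [nsmul_eq_mul, mul_one] at this
      rw [CharP.cast_eq_zero_iff k p] at this
      have h2 : (p-1).choose (r-1-i) ∣ (p-1).factorial :=
        ⟨_, (by rw [← mul_assoc]; exact (Nat.choose_mul_factorial_mul_factorial (by omega)).symm)⟩
      have h3 := (hp.dvd_factorial).mp (this.trans h2)
      have := hp.pos
      omega
    · intro x _ hx
      rw [map_nsmul, coord_t t r s h0r h0s B hB, if_neg, nsmul_zero]
      simp only
      intro h; apply hx; ext <;> simp <;> omega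
    · intro h
      exfalso; apply h
      rw [Finset.HasAntidiagonal.mem_antidiagonal]
      simp only; omega
  · rw [F_pow_t F t hF]
    apply Finset.sum_eq_zero
    intro x hx
    rw [Finset.HasAntidiagonal.mem_antidiagonal] at hx
    by_cases h1 : x.1 = 0
    · rw [h0s _ _ (by omega), nsmul_zero]
    by_cases h2 : x.1 = p
    · rw [h0r _ _ (by omega), nsmul_zero]
    · have := hp.dvd_choose_self h1 (by omega)
      rw [← Nat.cast_smul_eq_nsmul k, (CharP.cast_eq_zero_iff k p _).mpr this, zero_smul]
end strings

theorem main_abs {k : Type} {V : Type*} [Field k] [AddCommGroup V] [Module k V]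
    (X Y : Module.End k V) (hXY : Commute X Y) (v : V) (p r s : ℕ) [CharP k p] (hp : p.Prime)
    (hr1 : 1 ≤ r) (hrs : r ≤ s) (hs : s < p) (hfd : Module.finrank k V = r * s)
    (hX : X ^ r = 0) (hY : Y ^ s = 0) (hv : (X ^ (r-1) * Y ^ (s-1)) v ≠ 0)
    (d c m : ℕ) (hd : d + r = s) (hc : c = min r (p - s)) (hm : m * p + c * d + c ^ 2 = r * s) :
    ∃ e : V ≃ₗ[k] ((∀ i : Fin c, Fin (d + 2 * (i : ℕ) + 1) → k) × (Fin m → Fin p → k)),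
      ∀ x, e (x + (X + Y) x) =
        (LinearMap.prodMap
          (LinearMap.pi fun i : Fin c =>
            (sigmaL k (d + 2 * (i : ℕ) + 1)) ∘ₗ LinearMap.proj i)
          (LinearMap.pi fun j : Fin m => (sigmaL k p) ∘ₗ LinearMap.proj j)) (e x) := by
  have hmc : m + c = r := by
    have hp0 := hp.pos
    rcases le_total r (p - s) with h | h
    · rw [min_eq_left h] at hc
      subst hc hd
      have : m * p = 0 := by nlinarith
      have : m = 0 := by
        rcases Nat.mul_eq_zero.mp this with h | h <;> omega
      omega
    · rw [min_eq_right h] at hc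
      have h1 : c + s = p := by omega
      subst hd
      have : m * p + c * p = r * p := by
        rw [← h1] at hm ⊢
        nlinarith
      have : (m + c) * p = r * p := by rw [add_mul, this]
      exact Nat.eq_of_mul_eq_mul_right hp0 this
  have : FiniteDimensional k V := by
    apply FiniteDimensional.of_finrank_pos
    rw [hfd]; exact Nat.mul_pos (by omega) (by omega)
  let t : ℕ → ℕ → V := fun a b => (X ^ a * Y ^ b) v
  have h0r : ∀ a b, r ≤ a → t a b = 0 := by
    intro a b h
    simp only [t]
    rw [pow_eq_zero_of_le h hX]; simp
  have h0s : ∀ a b, s ≤ b → t a b = 0 := by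
    intro a b h
    simp only [t]
    rw [pow_eq_zero_of_le h hY]; simp
  have hF : ∀ a b, (X + Y) (t a b) = t (a+1) b + t a (b+1) := by
    intro a b
    simp only [t, LinearMap.add_apply]
    rw [← Module.End.mul_apply, ← Module.End.mul_apply, ← mul_assoc, ← pow_succ', ← mul_assoc,
      ((hXY.symm.pow_right a)).eq, mul_assoc, ← pow_succ']
  have hli := tt_li X Y hXY v r s hX hY hv
  have : Nonempty (Fin r × Fin s) := ⟨(⟨0, by omega⟩, ⟨0, by omega⟩)⟩
  let B := basisOfLinearIndependentOfCardEqFinrank hli (by simp [hfd])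
  have hB : ∀ x, B x = t x.1 x.2 := by
    intro x
    simp [B, t]
  obtain ⟨E, hE⟩ := exists_E t r s h0r h0s B hB
  have hr : r < p := by omega
  have hw : ∀ j : Fin c, ∃ w ∈ Wd k t (r - 1 - (j : ℕ)), w ≠ 0 ∧ E w = 0 := by
    intro j
    exact exists_prim E t r s p h0r h0s B hB hr hE _ (by omega) hrs
  choose w hwm hw0 hEw using hw
  have hws : ∀ j : Fin c, ((X + Y) ^ (d + 2 * (j : ℕ))) (w j) ≠ 0 ∧
      ((X + Y) ^ (d + 2 * (j : ℕ) + 1)) (w j) = 0 := by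
    intro j
    have := j.2
    exact prim_string E (X + Y) t r s p hp h0r h0s B hB hr hF hE (r - 1 - (j : ℕ)) _ (by omega)
      (by omega) (by omega) (w j) (hwm j) (hw0 j) (hEw j)
  have hts : ∀ i : Fin m, ((X + Y) ^ (p - 1)) (t i 0) ≠ 0 ∧ ((X + Y) ^ p) (t i 0) = 0 := by
    intro i
    have := i.2
    exact top_string (X + Y) t r s p hp h0r h0s B hB hr hs hF i (by omega)
  let n : Fin c ⊕ Fin m → ℕ := Sum.elim (fun j => d + 2 * (j : ℕ) + 1) (fun _ => p)
  let u : Fin c ⊕ Fin m → V := Sum.elim w (fun i => t i 0)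
  let D : Fin c ⊕ Fin m → ℕ := Sum.elim (fun j => s - 1 + (j : ℕ)) (fun i => (i : ℕ) + (p - 1))
  have hD : Function.Injective D := by
    rintro (i | i) (j | j) h <;> simp only [D, Sum.elim_inl, Sum.elim_inr] at h
    · congr 1; ext; omega
    · exfalso; have := i.2; omega
    · exfalso; have := j.2; omega
    · congr 1; ext; omega
  obtain ⟨g, hg⟩ := jordan_crit (X + Y) n u
    (by rintro (i | i)
        · simp [n]
        · exact hp.pos)
    (by rintro (i | i)
        · exact (hws i).2
        · exact (hts i).2)
    (by apply W_li t r s h0r h0s B hB D hD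
        · rintro (i | i)
          · have := Fpow_mem (X + Y) t hF _ _ (hwm i) (d + 2 * (i : ℕ))
            have e : r - 1 - (i : ℕ) + (d + 2 * (i : ℕ)) = D (Sum.inl i) := by
              simp only [D, Sum.elim_inl]; omega
            rw [e] at this
            exact this
          · exact Fpow_mem (X + Y) t hF i (t i 0) (t_mem t _ _ _ rfl) (p - 1)
        · rintro (i | i)
          · exact (hws i).1
          · exact (hts i).1)
    (by rw [hfd, ← hm]
        simp only [n, Fintype.sum_sum_type, Sum.elim_inl, Sum.elim_inr, Finset.sum_const,
          Finset.card_univ, Fintype.card_fin, smul_eq_mul]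
        rw [Fin.sum_univ_eq_sum_range (fun j => d + 2 * j + 1)]
        have : ∀ c : ℕ, ∑ j ∈ range c, (d + 2 * j + 1) = c * d + c ^ 2 := by
          intro c
          induction c with
          | zero => simp
          | succ c ih => rw [Finset.sum_range_succ, ih]; ring
        rw [this]; ring)
  refine ⟨g.symm.trans (LinearEquiv.sumPiEquivProdPi k (Fin c) (Fin m) (fun i => Fin (n i) → k)), ?_⟩
  have key : ∀ x, g.symm (x + (X + Y) x) = fun i => sigmaL k (n i) (g.symm x i) := by
    intro x
    rw [LinearEquiv.symm_apply_eq, hg, LinearEquiv.apply_symm_apply]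
  intro x
  exact Prod.ext (funext fun i => congrFun (key x) (Sum.inl i))
    (funext fun i => congrFun (key x) (Sum.inr i))

theorem jordan_pow (k : Type) [Field k] (s j : ℕ) (f : Fin s → k) (i : Fin s) :
    (((jordanN k s).mulVecLin) ^ j) f i = if h : (i : ℕ) + j < s then f ⟨i + j, h⟩ else 0 := by
  induction j generalizing f with
  | zero => simp
  | succ j ih =>
    rw [pow_succ, Module.End.mul_apply, ih]
    have hN : ∀ a : Fin s, (jordanN k s).mulVecLin f a =
        if h : (a : ℕ) + 1 < s then f ⟨a + 1, h⟩ else 0 := by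
      intro a
      simp only [jordanN, Matrix.mulVecLin_apply, Matrix.mulVec, dotProduct, Matrix.of_apply,
        ite_mul, one_mul, zero_mul]
      split_ifs with h
      · rw [Finset.sum_eq_single ⟨a+1, h⟩]
        · simp
        · intro b _ hb
          rw [if_neg]
          intro h; apply hb; ext; simp [h]
        · simp
      · apply Finset.sum_eq_zero
        intro b _
        rw [if_neg]
        have := b.2
        omega
    simp only [hN]
    split_ifs <;> first | rfl | omega

theorem jordan_nil (k : Type) [Field k] (s : ℕ) : ((jordanN k s).mulVecLin) ^ s = 0 := by
  apply LinearMap.ext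
  intro f
  ext i
  rw [jordan_pow, dif_neg (by omega)]
  rfl

theorem jordan_top (k : Type) [Field k] (s : ℕ) (hs : 1 ≤ s) :
    (((jordanN k s).mulVecLin) ^ (s - 1)) (Pi.single ⟨s - 1, by omega⟩ 1) =
      Pi.single ⟨0, hs⟩ 1 := by
  ext i
  rw [jordan_pow]
  by_cases hi : (i : ℕ) = 0
  · have : i = ⟨0, hs⟩ := by ext; exact hi
    subst this
    rw [dif_pos (by simp; omega)]
    simp
  · rw [dif_neg (by omega), Pi.single_eq_of_ne]
    intro h; apply hi; rw [h]

theorem sigma_eq (k : Type) [Field k] (s : ℕ) :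
    sigmaL k s = 1 + (jordanN k s).mulVecLin := by
  apply LinearMap.ext
  intro f
  simp [sigmaL, Matrix.add_mulVec]


/-- Over an algebraically closed field of characteristic `p > 0`,
for `1 ≤ r, s ≤ p − 1`, with `d = |r − s|`, `c = min(r, s, p−r, p−s)` and
`m = (r·s − c·|r−s| − c²)/p`, there is an isomorphism of representations of `C_p`:
`L_r ⊗ L_s ≅ (⨁_{i=1}^{c} L_{|r−s|+2i−1}) ⊕ (L_p)^{⊕m}`.
(Here the `i`-th factor, `0 ≤ i < c`, has size `d + 2i + 1 = |r−s| + 2(i+1) − 1`.) -/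
theorem stmt5 (p : ℕ) (hp : p.Prime) (k : Type) [Field k] [IsAlgClosed k] [CharP k p]
    (r s : ℕ) (hr1 : 1 ≤ r) (hr2 : r ≤ p - 1) (hs1 : 1 ≤ s) (hs2 : s ≤ p - 1)
    (d c m : ℕ) (hd : d = max r s - min r s)
    (hc : c = min (min r s) (min (p - r) (p - s)))
    (hm : (m : ℤ) * p = r * s - c * d - c ^ 2) :
    ∃ e : TensorProduct k (Fin r → k) (Fin s → k) ≃ₗ[k]
        ((∀ i : Fin c, Fin (d + 2 * (i : ℕ) + 1) → k) × (Fin m → Fin p → k)),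
      ∀ x, e (TensorProduct.map (sigmaL k r) (sigmaL k s) x) =
        (LinearMap.prodMap
          (LinearMap.pi fun i : Fin c =>
            (sigmaL k (d + 2 * (i : ℕ) + 1)) ∘ₗ LinearMap.proj i)
          (LinearMap.pi fun j : Fin m => (sigmaL k p) ∘ₗ LinearMap.proj j)) (e x) := by
  have hXY0 : ∃ X Y : Module.End k (TensorProduct k (Fin r → k) (Fin s → k)), ∃ v,
      Commute X Y ∧ X ^ r = 0 ∧ Y ^ s = 0 ∧ (X ^ (r-1) * Y ^ (s-1)) v ≠ 0 ∧
      ∀ x, TensorProduct.map (sigmaL k r) (sigmaL k s) x = x + (X + Y) x := by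
    set N := (jordanN k r).mulVecLin with hN
    set M := (jordanN k s).mulVecLin with hM
    have hNσ : Commute N (sigmaL k r) := by
      rw [sigma_eq, ← hN]; exact (Commute.one_right N).add_right (Commute.refl N)
    refine ⟨TensorProduct.map N 1, TensorProduct.map (sigmaL k r) M,
      TensorProduct.tmul k (Pi.single ⟨r - 1, by omega⟩ 1) (Pi.single ⟨s - 1, by omega⟩ 1), ?_, ?_, ?_, ?_, ?_⟩
    · change _ * _ = _ * _
      rw [← TensorProduct.map_mul, ← TensorProduct.map_mul, hNσ.eq, one_mul, mul_one]
    · rw [TensorProduct.map_pow, jordan_nil, TensorProduct.map_zero_left]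
    · rw [TensorProduct.map_pow, jordan_nil, TensorProduct.map_zero_right]
    · rw [TensorProduct.map_pow, TensorProduct.map_pow, ← TensorProduct.map_mul, one_pow, one_mul,
        TensorProduct.map_tmul, (hNσ.pow_pow _ _).eq, Module.End.mul_apply, hN, hM,
        jordan_top k r hr1, jordan_top k s hs1]
      have h1 : ∀ n : ℕ, ((sigmaL k r) ^ n) (Pi.single ⟨0, hr1⟩ 1) = Pi.single ⟨0, hr1⟩ 1 := by
        intro n
        induction n with
        | zero => simp
        | succ n ih =>
          rw [pow_succ, Module.End.mul_apply]
          have : sigmaL k r (Pi.single ⟨0, hr1⟩ 1) = Pi.single ⟨0, hr1⟩ 1 := by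
            rw [sigma_eq, LinearMap.add_apply, Module.End.one_apply]
            convert add_zero _
            ext i
            have := jordan_pow k r 1 (Pi.single ⟨0, hr1⟩ 1) i
            rw [pow_one] at this
            rw [this]
            split_ifs with h
            · rw [Pi.single_eq_of_ne]; rfl
              intro h; simp at h
            · rfl
          rw [this, ih]
      rw [h1]
      have := ((Pi.basisFun k (Fin r)).tensorProduct (Pi.basisFun k (Fin s))).ne_zero
        (⟨0, hr1⟩, ⟨0, hs1⟩)
      simpa using this
    · intro x
      have : TensorProduct.map (sigmaL k r) (sigmaL k s) =
          1 + (TensorProduct.map N 1 + TensorProduct.map (sigmaL k r) M) := by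
        conv_lhs => rw [sigma_eq k s, TensorProduct.map_add_right, ← hM]
        conv_lhs => enter [1]; rw [sigma_eq k r, TensorProduct.map_add_left, ← hN]
        rw [TensorProduct.map_one, add_assoc]
      rw [this]; rfl
  obtain ⟨X, Y, v, hXY, hX, hY, hv, hσ⟩ := hXY0
  have hp0 := hp.pos
  have hfd : Module.finrank k (TensorProduct k (Fin r → k) (Fin s → k)) = r * s := by simp
  have hm' : m * p + c * d + c ^ 2 = r * s := by
    have : (m : ℤ) * p + c * d + c ^ 2 = r * s := by rw [hm]; ring
    exact_mod_cast this
  simp only [hσ]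
  rcases le_total r s with h | h
  · exact main_abs X Y hXY v p r s hp hr1 h (by omega) hfd hX hY hv d c m (by omega) (by omega) hm'
  · rw [add_comm X Y]
    exact main_abs Y X hXY.symm v p s r hp hs1 h (by omega) (by rw [hfd, mul_comm]) hY hX
      (by rw [← (hXY.pow_pow _ _).eq]; exact hv) d c m (by omega) (by omega) (by rw [hm', mul_comm])
end

section
/- Let k be an algebraically closed field of characteristic p > 0 and let r, s be integers with 1 ≤ r, s ≤ p. Let N_r and N_s be nilpotent single Jordan blocks (nilpotent of index r, resp. s) on k^r and k^s. Then the endomorphism N_r ⊗ 1 + 1 ⊗ N_s of k^r ⊗ k^s is nilpotent of index at most p, and its Jordan type coincides with that of u_r ⊗ u_s − 1 for unipotent Jordan blocks: for 1 ≤ r, s ≤ p−1, with c = min(r, s, p−r, p−s) and m = (r·s − c·|r−s| − c²)/p, the Jordan type of N_r ⊗ 1 + 1 ⊗ N_s on k^r ⊗ k^s consists of the blocks of sizes |r−s|+1, |r−s|+3, ..., |r−s|+2c−1 together with m blocks of size p. (These are the representations of the Frobenius kernel G_{a,1}, i.e., modules over the Hopf algebra k[x]/(x^p) with primitive x, whose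 tensor product decompositions coincide with those for the cyclic group C_p.) -/
/-- The operator `N_r ⊗ 1 + 1 ⊗ N_s` on `k^r ⊗ k^s`: the action of the primitive
generator `x` of `k[x]/(x^p)` on the tensor product of the `G_{a,1}`-modules
`k^r` and `k^s`. -/
noncomputable def tensorN (k : Type) [Field k] (r s : ℕ) :
    TensorProduct k (Fin r → k) (Fin s → k) →ₗ[k] TensorProduct k (Fin r → k) (Fin s → k) :=
  TensorProduct.map ((jordanN k r).mulVecLin) LinearMap.id +
    TensorProduct.map LinearMap.id ((jordanN k s).mulVecLin)


theorem jordanN_mulVec_apply (k : Type) [Field k] (s : ℕ) (v : Fin s → k) (i : Fin s) :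
    (jordanN k s).mulVecLin v i = if h : (i : ℕ) + 1 < s then v ⟨i + 1, h⟩ else 0 := by
  simp only [Matrix.mulVecLin_apply, Matrix.mulVec, dotProduct, jordanN, Matrix.of_apply]
  split_ifs with h
  · rw [Finset.sum_eq_single (⟨i + 1, h⟩ : Fin s)]
    · simp
    · intro b _ hb
      rw [if_neg, zero_mul]
      intro h2
      exact hb (Fin.ext h2.symm)
    · simp
  · apply Finset.sum_eq_zero
    intro b _
    rw [if_neg, zero_mul]
    have := b.2
    omega

/-- the map sending the standard basis of a block to the string of `w`. -/
noncomputable def strMap {k V : Type} [Field k] [AddCommGroup V] [Module k V]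
    (T : V →ₗ[k] V) (l : ℕ) (w : V) : (Fin l → k) →ₗ[k] V :=
  ∑ j : Fin l, (LinearMap.toSpanSingleton k V ((T ^ (l - 1 - (j : ℕ))) w)) ∘ₗ LinearMap.proj j

theorem strMap_apply {k V : Type} [Field k] [AddCommGroup V] [Module k V]
    (T : V →ₗ[k] V) (l : ℕ) (w : V) (v : Fin l → k) :
    strMap T l w v = ∑ j : Fin l, v j • ((T ^ (l - 1 - (j : ℕ))) w) := by
  simp [strMap, LinearMap.sum_apply]

theorem strMap_comm {k V : Type} [Field k] [AddCommGroup V] [Module k V]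
    (T : V →ₗ[k] V) (l : ℕ) (w : V) (hw : (T ^ l) w = 0) (v : Fin l → k) :
    T (strMap T l w v) = strMap T l w ((jordanN k l).mulVecLin v) := by
  rw [strMap_apply, strMap_apply]
  cases l with
  | zero => simp
  | succ n =>
    rw [map_sum, Fin.sum_univ_succ, Fin.sum_univ_castSucc]
    have h1 : T (v 0 • ((T ^ (n + 1 - 1 - ((0 : Fin (n+1)) : ℕ))) w)) = 0 := by
      rw [map_smul]
      have : T ((T ^ (n + 1 - 1 - ((0 : Fin (n+1)) : ℕ))) w) = (T ^ (n+1)) w := by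
        rw [pow_succ']; simp
      rw [this, hw, smul_zero]
    have h2 : ((jordanN k (n+1)).mulVecLin v) (Fin.last n) = 0 := by
      rw [jordanN_mulVec_apply]; simp
    rw [h1, h2, zero_smul, zero_add, add_zero]
    apply Finset.sum_congr rfl
    intro j _
    have hj := j.2
    rw [jordanN_mulVec_apply, dif_pos (by simp), map_smul]
    congr 1
    have : n + 1 - 1 - ((Fin.castSucc j : Fin (n+1)) : ℕ)
        = (n + 1 - 1 - ((Fin.succ j : Fin (n+1)) : ℕ)) + 1 := by
      simp; omega
    rw [this, pow_succ']; rfl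

theorem strings_equiv {k V ι : Type} [Field k] [AddCommGroup V] [Module k V]
    [FiniteDimensional k V] [Fintype ι] (T : V →ₗ[k] V) (l : ι → ℕ) (hl : ∀ i, 0 < l i)
    (w : ι → V) (hw : ∀ i, (T ^ (l i)) (w i) = 0)
    (hli : LinearIndependent k fun i => (T ^ (l i - 1)) (w i))
    (hdim : ∑ i, l i = Module.finrank k V) :
    ∃ e : V ≃ₗ[k] (∀ i, Fin (l i) → k), ∀ x, e (T x) =
      fun i => (jordanN k (l i)).mulVecLin (e x i) := by
  classical
  let g : (∀ i, Fin (l i) → k) →ₗ[k] V := ∑ i, strMap T (l i) (w i) ∘ₗ LinearMap.proj i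
  have g_apply : ∀ v, g v = ∑ i, strMap T (l i) (w i) (v i) := by
    intro v; simp [g, LinearMap.sum_apply]
  have g_comm : ∀ v, T (g v) = g (fun i => (jordanN k (l i)).mulVecLin (v i)) := by
    intro v
    rw [g_apply, g_apply, map_sum]
    exact Finset.sum_congr rfl fun i _ => strMap_comm T _ _ (hw i) _
  have key : ∀ (t : ℕ) (v : ∀ i, Fin (l i) → k),
      (∀ i (j : Fin (l i)), t ≤ (j : ℕ) → v i j = 0) → g v = 0 → v = 0 := by
    intro t
    induction t with
    | zero => intro v h _; funext i j; exact h i j (Nat.zero_le _)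
    | succ t ih =>
      intro v h hv
      have h1 := ih (fun i => (jordanN k (l i)).mulVecLin (v i)) (by
        intro i j hj
        show (jordanN k (l i)).mulVecLin (v i) j = 0
        rw [jordanN_mulVec_apply]
        split_ifs with h2
        · exact h i _ (by simpa using hj)
        · rfl) (by rw [← g_comm, hv, map_zero])
      have h2 : ∀ i (j : Fin (l i)), 1 ≤ (j : ℕ) → v i j = 0 := by
        intro i j hj
        have hj2 := j.2
        have h3 := congrFun (congrFun h1 i) ⟨j - 1, by omega⟩
        simp only [jordanN_mulVec_apply] at h3
        rw [dif_pos (by omega)] at h3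
        have : (⟨(j : ℕ) - 1 + 1, by omega⟩ : Fin (l i)) = j := by ext; simp; omega
        rw [this] at h3
        exact h3
      have h4 : ∑ i, (v i ⟨0, hl i⟩) • (T ^ (l i - 1)) (w i) = 0 := by
        rw [g_apply] at hv
        rw [← hv]
        apply Finset.sum_congr rfl
        intro i _
        rw [strMap_apply, Finset.sum_eq_single (⟨0, hl i⟩ : Fin (l i))]
        · simp
        · intro b _ hb
          rw [h2 i b, zero_smul]
          by_contra hc
          exact hb (Fin.ext (by simp; omega))
        · simp
      have h5 := Fintype.linearIndependent_iff.1 hli _ h4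
      funext i j
      by_cases hj : 1 ≤ (j : ℕ)
      · exact h2 i j hj
      · have : j = ⟨0, hl i⟩ := Fin.ext (by simp; omega)
        rw [this]; exact h5 i
  have ginj : Function.Injective g := by
    rw [injective_iff_map_eq_zero]
    intro v hv
    refine key (∑ i, l i) v ?_ hv
    intro i j hj
    have := Finset.single_le_sum (f := l) (fun i _ => Nat.zero_le _) (Finset.mem_univ i)
    have := j.2
    omega
  have hfr : Module.finrank k (∀ i, Fin (l i) → k) = Module.finrank k V := by
    rw [Module.finrank_pi_fintype, ← hdim]; simp
  let e := LinearEquiv.ofInjectiveOfFinrankEq g ginj hfr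
  have he : ∀ v, e v = g v := fun v => rfl
  refine ⟨e.symm, fun x => ?_⟩
  rw [LinearEquiv.symm_apply_eq, he, ← g_comm, ← he, LinearEquiv.apply_symm_apply]

/-- shift in the first variable -/
def shX (k : Type) [Field k] : Module.End k (ℕ → ℕ → k) where
  toFun v i j := v (i + 1) j
  map_add' _ _ := rfl
  map_smul' _ _ := rfl

/-- shift in the second variable -/
def shY (k : Type) [Field k] : Module.End k (ℕ → ℕ → k) where
  toFun v i j := v i (j + 1)
  map_add' _ _ := rfl
  map_smul' _ _ := rfl

/-- the model of the operator -/
noncomputable def opN (k : Type) [Field k] : Module.End k (ℕ → ℕ → k) := shX k + shY k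

theorem opN_apply (k : Type) [Field k] (v : ℕ → ℕ → k) (i j : ℕ) :
    opN k v i j = v (i + 1) j + v i (j + 1) := rfl

theorem shX_pow (k : Type) [Field k] (t : ℕ) (v : ℕ → ℕ → k) (i j : ℕ) :
    (shX k ^ t) v i j = v (i + t) j := by
  induction t generalizing i with
  | zero => rfl
  | succ t ih =>
    rw [pow_succ']
    show (shX k ^ t) v (i + 1) j = _
    rw [ih]; congr 1; omega

theorem shY_pow (k : Type) [Field k] (t : ℕ) (v : ℕ → ℕ → k) (i j : ℕ) :
    (shY k ^ t) v i j = v i (j + t) := by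
  induction t generalizing j with
  | zero => rfl
  | succ t ih =>
    rw [pow_succ']
    show (shY k ^ t) v i (j + 1) = _
    rw [ih]; congr 1; omega

theorem opN_pow (k : Type) [Field k] (t : ℕ) (v : ℕ → ℕ → k) (i j : ℕ) :
    (opN k ^ t) v i j = ∑ a ∈ Finset.range (t + 1), (t.choose a : k) * v (i + a) (j + (t - a)) := by
  have hc : Commute (shX k) (shY k) := rfl
  rw [opN, hc.add_pow, LinearMap.sum_apply, Finset.sum_apply, Finset.sum_apply]
  apply Finset.sum_congr rfl
  intro a _
  rw [← Nat.cast_comm, ← nsmul_eq_mul, LinearMap.smul_apply, Pi.smul_apply, Pi.smul_apply, nsmul_eq_mul,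
    Module.End.mul_apply, shX_pow, shY_pow]

/-- the opposite sl2 operator -/
noncomputable def opF (k : Type) [Field k] (r s : ℕ) (v : ℕ → ℕ → k) : ℕ → ℕ → k := fun i j =>
  (i : k) * ((r : k) - i) * v (i - 1) j + (j : k) * ((s : k) - j) * v i (j - 1)

theorem opF_opN (k : Type) [Field k] (r s : ℕ) (v : ℕ → ℕ → k) (i j : ℕ) :
    opF k r s (opN k v) i j = opN k (opF k r s v) i j
      - ((r : k) + s - 2 - 2 * ((i : k) + j)) * v i j := by
  simp only [opF, opN_apply]
  rcases i with _ | i <;> rcases j with _ | j <;> simp <;> ring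

theorem opN_supp (k : Type) [Field k] (D : ℕ) (v : ℕ → ℕ → k) (hv : ∀ i j, i + j ≠ D → v i j = 0)
    (t i j : ℕ) (h : i + j + t ≠ D) : (opN k ^ t) v i j = 0 := by
  rw [opN_pow]
  apply Finset.sum_eq_zero
  intro a ha
  rw [Finset.mem_range] at ha
  rw [hv _ _ (by omega), mul_zero]

theorem opF_pow (k : Type) [Field k] (r s D n δ : ℕ) (v : ℕ → ℕ → k)
    (hD : D + δ + 2 = r + s) (hn : n + 2 * δ + 2 = r + s)
    (hv : ∀ i j, i + j ≠ D → v i j = 0) (hF : opF k r s v = 0) (t i j : ℕ) :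
    opF k r s ((opN k ^ (t + 1)) v) i j = ((t : k) + 1) * ((n : k) - t) * (opN k ^ t) v i j := by
  have hDk : (D : k) + δ + 2 = r + s := by exact_mod_cast congrArg (Nat.cast : ℕ → k) hD
  have hnk : (n : k) + 2 * δ + 2 = r + s := by exact_mod_cast congrArg (Nat.cast : ℕ → k) hn
  have hH : ∀ (t i j : ℕ), ((r : k) + s - 2 - 2 * ((i : k) + j)) * (opN k ^ t) v i j
      = -((n : k) - 2 * t) * (opN k ^ t) v i j := by
    intro t i j
    by_cases h : i + j + t = D
    · have hk : (i : k) + j + t = D := by exact_mod_cast congrArg (Nat.cast : ℕ → k) h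
      congr 1
      linear_combination (-2 : k) * hk - 2 * hDk + hnk
    · rw [opN_supp k D v hv t i j h]; simp
  induction t generalizing i j with
  | zero =>
    have h1 := opF_opN k r s v i j
    have h2 := hH 0 i j
    rw [pow_zero, Module.End.one_apply] at h2
    rw [zero_add, pow_one, h1, h2, hF, pow_zero, Module.End.one_apply, map_zero]
    simp
  | succ t ih =>
    rw [pow_succ' (opN k) (t + 1), Module.End.mul_apply, opF_opN, hH]
    have h3 : opF k r s ((opN k ^ (t + 1)) v)
        = (((t : k) + 1) * ((n : k) - t)) • (opN k ^ t) v := by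
      funext i j; rw [ih]; rfl
    rw [h3, map_smul, ← Module.End.mul_apply, ← pow_succ']
    simp only [Pi.smul_apply, smul_eq_mul]
    push_cast
    ring

theorem cast_ne_s15 (p : ℕ) (k : Type) [Field k] [CharP k p] (a : ℕ) (h0 : 0 < a) (h : a < p) :
    (a : k) ≠ 0 := by
  intro h1
  rw [CharP.cast_eq_zero_iff k p] at h1
  exact absurd (Nat.le_of_dvd h0 h1) (by omega)

theorem opF_inj (p : ℕ) (k : Type) [Field k] [CharP k p] (r s δ : ℕ)
    (hr : r ≤ p) (hδ : δ < r) (v : ℕ → ℕ → k) (hv : ∀ i j, i + j + 1 ≠ δ → v i j = 0)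
    (hF : opF k r s v = 0) : v = 0 := by
  have : ∀ j i, v i j = 0 := by
    intro j
    induction j with
    | zero =>
      intro i
      by_cases h : i + 0 + 1 = δ
      · have h1 := congrFun (congrFun hF (i + 1)) 0
        simp only [opF, Nat.add_sub_cancel, Nat.cast_zero, zero_mul, add_zero, Pi.zero_apply] at h1
        have h2 : ((r : k) - ((i + 1 : ℕ) : k)) ≠ 0 := by
          rw [← Nat.cast_sub (by omega)]
          exact cast_ne_s15 p k _ (by omega) (by omega)
        have h3 : ((i + 1 : ℕ) : k) ≠ 0 := cast_ne_s15 p k _ (by omega) (by omega)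
        simpa [h2, h3] using (mul_eq_zero.1 h1).resolve_left (mul_ne_zero h3 h2)
      · exact hv _ _ h
    | succ j ih =>
      intro i
      by_cases h : i + (j + 1) + 1 = δ
      · have h1 := congrFun (congrFun hF (i + 1)) (j + 1)
        simp only [opF, Nat.add_sub_cancel, Pi.zero_apply, ih, mul_zero, add_zero] at h1
        have h2 : ((r : k) - ((i + 1 : ℕ) : k)) ≠ 0 := by
          rw [← Nat.cast_sub (by omega)]
          exact cast_ne_s15 p k _ (by omega) (by omega)
        have h3 : ((i + 1 : ℕ) : k) ≠ 0 := cast_ne_s15 p k _ (by omega) (by omega)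
        exact (mul_eq_zero.1 h1).resolve_left (mul_ne_zero h3 h2)
      · exact hv _ _ h
  funext i j; exact this j i

/-- coefficients of the primitive vector -/
noncomputable def uCoef (k : Type) [Field k] (r s δ : ℕ) : ℕ → k
  | 0 => 1
  | a + 1 => -(((s : k) - δ + a) * ((δ : k) - a) / (((r : k) - (a + 1)) * ((a : k) + 1)))
      * uCoef k r s δ a

theorem exists_prim_s15 (p : ℕ) (k : Type) [Field k] [CharP k p] (r s δ : ℕ)
    (hr : r ≤ p) (hδ : δ < r) (hδs : δ < s) :
    ∃ v : ℕ → ℕ → k, (∀ i j, ¬ (i < r ∧ j < s) → v i j = 0) ∧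
      (∀ i j, i + j ≠ r + s - 2 - δ → v i j = 0) ∧ opF k r s v = 0 ∧ v ≠ 0 := by
  refine ⟨fun i j => if i < r ∧ j < s ∧ i + j = r + s - 2 - δ then uCoef k r s δ (r - 1 - i) else 0,
    ?_, ?_, ?_, ?_⟩
  · intro i j h; exact if_neg (by tauto)
  · intro i j h; exact if_neg (by tauto)
  · funext i j
    simp only [opF, Pi.zero_apply]
    by_cases hij : i + j = r + s - 1 - δ
    · rcases lt_trichotomy i r with hi | hi | hi
      · rcases lt_trichotomy j s with hj | hj | hj
        · -- main case
          rw [if_pos (by omega), if_pos (by omega)]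
          obtain ⟨a, ha⟩ : ∃ a, r = i + a + 1 := ⟨r - i - 1, by omega⟩
          have e1 : r - 1 - (i - 1) = a + 1 := by omega
          have e2 : r - 1 - i = a := by omega
          rw [e1, e2, uCoef]
          have h2 : ((r : k) - (a + 1)) = (i : k) := by rw [ha]; push_cast; ring
          have h3 : (i : k) ≠ 0 := cast_ne_s15 p k _ (by omega) (by omega)
          have h4 : (a : k) + 1 ≠ 0 := by
            exact_mod_cast cast_ne_s15 p k (a + 1) (by omega) (by omega)
          have h5 : (r : k) - i = a + 1 := by rw [ha]; push_cast; ring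
          have h6 : (j : k) = (s : k) - δ + a := by
            have : j + δ = s + a := by omega
            have := congrArg (Nat.cast : ℕ → k) this
            push_cast at this
            linear_combination this
          rw [h2, h5, h6]
          field_simp
          ring
        · have h1 : (if i - 1 < r ∧ j < s ∧ i - 1 + j = r + s - 2 - δ then
              uCoef k r s δ (r - 1 - (i - 1)) else 0) = 0 := if_neg (by omega)
          rw [h1, hj]; simp
        · rw [if_neg (by omega), if_neg (by omega)]; simp
      · rw [hi]; simp
      · rw [if_neg (by omega), if_neg (by omega)]; simp
    · have h1 : (i : k) * (if i - 1 < r ∧ j < s ∧ i - 1 + j = r + s - 2 - δ then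
              uCoef k r s δ (r - 1 - (i - 1)) else 0) = 0 := by
        rcases i with _ | i
        · simp
        · rw [if_neg (by omega), mul_zero]
      have h2 : (j : k) * (if i < r ∧ j - 1 < s ∧ i + (j - 1) = r + s - 2 - δ then
              uCoef k r s δ (r - 1 - i) else 0) = 0 := by
        rcases j with _ | j
        · simp
        · rw [if_neg (by omega), mul_zero]
      linear_combination ((r : k) - i) * h1 + ((s : k) - j) * h2
  · intro h
    have h1 := congrFun (congrFun h (r - 1)) (s - 1 - δ)
    simp only [Pi.zero_apply] at h1
    rw [if_pos (by omega), Nat.sub_self, uCoef] at h1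
    exact one_ne_zero h1

theorem exists_small (p : ℕ) (k : Type) [Field k] [CharP k p] (r s δ n : ℕ)
    (hr : r ≤ p) (hδ : δ < r) (hδs : δ < s) (hn : n + 2 * δ + 2 = r + s) (hnp : n < p) :
    ∃ v : ℕ → ℕ → k, (∀ i j, ¬ (i < r ∧ j < s) → v i j = 0) ∧
      (opN k ^ (n + 1)) v = 0 ∧ (∀ i j, i + j ≠ δ → (opN k ^ n) v i j = 0) ∧
      (opN k ^ n) v ≠ 0 := by
  obtain ⟨v, h1, h2, h3, h4⟩ := exists_prim_s15 p k r s δ hr hδ hδs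
  have hP := opF_pow k r s (r + s - 2 - δ) n δ v (by omega) hn h2 h3
  refine ⟨v, h1, ?_, ?_, ?_⟩
  · apply opF_inj p k r s δ hr hδ
    · intro i j hij
      exact opN_supp k _ v h2 _ i j (by omega)
    · funext i j
      rw [hP]; simp
  · intro i j hij
    exact opN_supp k _ v h2 _ i j (by omega)
  · have : ∀ t, t ≤ n → (opN k ^ t) v ≠ 0 := by
      intro t
      induction t with
      | zero => intro _; simpa using h4
      | succ t ih =>
        intro ht hz
        apply ih (by omega)
        funext i j
        have h5 := hP t i j
        rw [hz] at h5
        have h6 : opF k r s 0 i j = 0 := by simp [opF]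
        rw [h6] at h5
        have h7 : (t : k) + 1 ≠ 0 := by
          exact_mod_cast cast_ne_s15 p k (t + 1) (by omega) (by omega)
        have h8 : (n : k) - t ≠ 0 := by
          rw [← Nat.cast_sub (by omega)]
          exact cast_ne_s15 p k _ (by omega) (by omega)
        exact (mul_eq_zero.1 h5.symm).resolve_left (mul_ne_zero h7 h8)
    exact this n le_rfl

theorem opN_pow_p (p : ℕ) (hp : p.Prime) (k : Type) [Field k] [CharP k p] (r s : ℕ)
    (hr : r ≤ p) (hs : s ≤ p) (v : ℕ → ℕ → k) (hv : ∀ i j, ¬ (i < r ∧ j < s) → v i j = 0) :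
    (opN k ^ p) v = 0 := by
  funext i j
  rw [opN_pow]
  apply Finset.sum_eq_zero
  intro a ha
  rw [Finset.mem_range] at ha
  rcases Nat.eq_zero_or_pos a with h | h
  · rw [hv _ _ (by omega), mul_zero]
  · rcases Nat.lt_or_ge a p with hh | hh
    · rw [(CharP.cast_eq_zero_iff k p _).2 (hp.dvd_choose_self (by omega) hh), zero_mul]
    · rw [hv _ _ (by omega), mul_zero]

theorem exists_big (p : ℕ) (hp : p.Prime) (k : Type) [Field k] [CharP k p] (r s δ : ℕ)
    (hr1 : 1 ≤ r) (hr : r ≤ p) (hδ : δ + p < r + s) :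
    ∃ v : ℕ → ℕ → k, (∀ i j, ¬ (i < r ∧ j < s) → v i j = 0) ∧
      (∀ i j, i + j ≠ δ → (opN k ^ (p - 1)) v i j = 0) ∧
      (opN k ^ (p - 1)) v ≠ 0 := by
  have hp1 := hp.one_lt
  have h2 : ∀ i j, i + j ≠ δ + (p - 1) →
    (fun i j => if i = r - 1 ∧ j = δ + p - r then (1 : k) else 0) i j = 0 := by
    intro i j h; exact if_neg (by omega)
  refine ⟨fun i j => if i = r - 1 ∧ j = δ + p - r then 1 else 0, ?_, ?_, ?_⟩
  · intro i j h; exact if_neg (by omega)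
  · intro i j hij
    exact opN_supp k _ _ h2 _ i j (by omega)
  · intro h
    have h1 := congrFun (congrFun h 0) δ
    rw [opN_pow, Finset.sum_eq_single (r - 1)] at h1
    · rw [if_pos (by omega), mul_one] at h1
      have h3 : p ∣ (p - 1).choose (r - 1) := (CharP.cast_eq_zero_iff k p _).1 h1
      have h4 : p ∣ (p - 1).factorial := by
        rw [← Nat.choose_mul_factorial_mul_factorial (show r - 1 ≤ p - 1 by omega), mul_assoc]
        exact h3.mul_right _
      have := (hp.dvd_factorial).1 h4
      omega
    · intro b _ hb
      rw [if_neg (by omega), mul_zero]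
    · intro hb; rw [Finset.mem_range] at hb; omega

/-- coordinates of the tensor product -/
noncomputable def coordE (k : Type) [Field k] (r s : ℕ) :
    TensorProduct k (Fin r → k) (Fin s → k) ≃ₗ[k] (Fin r × Fin s → k) :=
  ((Pi.basisFun k (Fin r)).tensorProduct (Pi.basisFun k (Fin s))).equivFun

theorem coordE_tmul (k : Type) [Field k] (r s : ℕ) (a : Fin r → k) (b : Fin s → k) (i j) :
    coordE k r s (TensorProduct.tmul k a b) (i, j) = a i * b j := by
  simp [coordE, Module.Basis.tensorProduct_repr_tmul_apply, mul_comm]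

/-- embedding into the model -/
noncomputable def emb (k : Type) [Field k] (r s : ℕ) :
    TensorProduct k (Fin r → k) (Fin s → k) →ₗ[k] (ℕ → ℕ → k) where
  toFun x i j := if h : i < r ∧ j < s then coordE k r s x (⟨i, h.1⟩, ⟨j, h.2⟩) else 0
  map_add' x y := by
    funext i j
    simp only [Pi.add_apply, map_add]
    split_ifs <;> simp
  map_smul' c x := by
    funext i j
    simp only [Pi.smul_apply, map_smul, RingHom.id_apply]
    split_ifs <;> simp

theorem emb_apply (k : Type) [Field k] (r s : ℕ) (x) (i j : ℕ) :
    emb k r s x i j = if h : i < r ∧ j < s then coordE k r s x (⟨i, h.1⟩, ⟨j, h.2⟩) else 0 := rfl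

theorem emb_supp (k : Type) [Field k] (r s : ℕ) (x) (i j : ℕ) (h : ¬ (i < r ∧ j < s)) :
    emb k r s x i j = 0 := dif_neg h

theorem emb_inj (k : Type) [Field k] (r s : ℕ) : Function.Injective (emb k r s) := by
  intro x y h
  apply (coordE k r s).injective
  funext ⟨i, j⟩
  have := congrFun (congrFun h i) j
  rw [emb_apply, emb_apply, dif_pos ⟨i.2, j.2⟩, dif_pos ⟨i.2, j.2⟩] at this
  exact this

theorem emb_surj (k : Type) [Field k] (r s : ℕ) (v : ℕ → ℕ → k)
    (hv : ∀ i j, ¬ (i < r ∧ j < s) → v i j = 0) : ∃ x, emb k r s x = v := by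
  refine ⟨(coordE k r s).symm fun q => v q.1 q.2, ?_⟩
  funext i j
  rw [emb_apply]
  split_ifs with h
  · simp
  · exact (hv i j h).symm

theorem emb_tensorN (k : Type) [Field k] (r s : ℕ) (x) :
    emb k r s (tensorN k r s x) = opN k (emb k r s x) := by
  have : emb k r s ∘ₗ tensorN k r s = opN k ∘ₗ emb k r s := by
    apply TensorProduct.ext'
    intro a b
    funext i j
    simp only [LinearMap.comp_apply, tensorN, LinearMap.add_apply, TensorProduct.map_tmul,
      LinearMap.id_apply, map_add, Pi.add_apply, opN_apply, emb_apply, coordE_tmul,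
      jordanN_mulVec_apply]
    by_cases hi : i < r <;> by_cases hj : j < s <;> by_cases hi1 : i + 1 < r <;>
      by_cases hj1 : j + 1 < s <;> simp [hi, hj, hi1, hj1] <;> omega
  exact LinearMap.congr_fun this x

theorem emb_pow (k : Type) [Field k] (r s t : ℕ) (x) :
    emb k r s ((tensorN k r s ^ t) x) = (opN k ^ t) (emb k r s x) := by
  induction t with
  | zero => rfl
  | succ t ih => rw [pow_succ', pow_succ', Module.End.mul_apply, emb_tensorN, ih]; rfl

theorem m_eq (p r s d c m : ℕ) (hp : 0 < p) (hr : r ≤ p - 1) (hs : s ≤ p - 1)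
    (hd : d = max r s - min r s) (hc : c = min (min r s) (min (p - r) (p - s)))
    (hm : (m : ℤ) * p = r * s - c * d - c ^ 2) : m = r + s - p := by
  have hpz : (p : ℤ) ≠ 0 := by exact_mod_cast hp.ne'
  have : (m : ℤ) = ((r + s - p : ℕ) : ℤ) := by
    apply mul_right_cancel₀ hpz
    rw [hm]
    rcases le_total r s with h | h <;> rcases le_total (r + s) p with hh | hh
    · have e1 : (c : ℤ) = r := by omega
      have e2 : (d : ℤ) = s - r := by omega
      have e3 : ((r + s - p : ℕ) : ℤ) = 0 := by omega
      rw [e1, e2, e3]; ring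
    · have e1 : (c : ℤ) = p - s := by omega
      have e2 : (d : ℤ) = s - r := by omega
      have e3 : ((r + s - p : ℕ) : ℤ) = r + s - p := by omega
      rw [e1, e2, e3]; ring
    · have e1 : (c : ℤ) = s := by omega
      have e2 : (d : ℤ) = r - s := by omega
      have e3 : ((r + s - p : ℕ) : ℤ) = 0 := by omega
      rw [e1, e2, e3]; ring
    · have e1 : (c : ℤ) = p - r := by omega
      have e2 : (d : ℤ) = r - s := by omega
      have e3 : ((r + s - p : ℕ) : ℤ) = r + s - p := by omega
      rw [e1, e2, e3]; ring
  exact_mod_cast this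

theorem sum_sizes (d c : ℕ) : ∑ i : Fin c, (d + 2 * (i : ℕ) + 1) = c * d + c ^ 2 := by
  rw [Fin.sum_univ_eq_sum_range (fun i => d + 2 * i + 1)]
  induction c with
  | zero => simp
  | succ c ih => rw [Finset.sum_range_succ, ih]; ring

/-- Over an algebraically closed field `k` of characteristic `p > 0`:
(1) for `1 ≤ r, s ≤ p` the operator `N_r ⊗ 1 + 1 ⊗ N_s` on `k^r ⊗ k^s` is nilpotent of
index at most `p`;
(2) for `1 ≤ r, s ≤ p − 1`, with `d = |r−s|`, `c = min(r, s, p−r, p−s)` and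
`m = (r·s − c·|r−s| − c²)/p`, its Jordan type consists of the nilpotent blocks of sizes
`|r−s|+1, |r−s|+3, …, |r−s|+2c−1` together with `m` blocks of size `p` (the `i`-th block,
`0 ≤ i < c`, has size `d + 2i + 1`). -/
theorem stmt15 (p : ℕ) (hp : p.Prime) (k : Type) [Field k] [IsAlgClosed k] [CharP k p] :
    (∀ r s : ℕ, 1 ≤ r → r ≤ p → 1 ≤ s → s ≤ p → (tensorN k r s) ^ p = 0)
    ∧ (∀ r s : ℕ, 1 ≤ r → r ≤ p - 1 → 1 ≤ s → s ≤ p - 1 →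
        ∀ d c m : ℕ, d = max r s - min r s →
          c = min (min r s) (min (p - r) (p - s)) →
          (m : ℤ) * p = r * s - c * d - c ^ 2 →
          ∃ e : TensorProduct k (Fin r → k) (Fin s → k) ≃ₗ[k]
              ((∀ i : Fin c, Fin (d + 2 * (i : ℕ) + 1) → k) × (Fin m → Fin p → k)),
            ∀ x, e (tensorN k r s x) =
              (LinearMap.prodMap
                (LinearMap.pi fun i : Fin c =>
                  ((jordanN k (d + 2 * (i : ℕ) + 1)).mulVecLin) ∘ₗ LinearMap.proj i)
                (LinearMap.pi fun j : Fin m =>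
                  ((jordanN k p).mulVecLin) ∘ₗ LinearMap.proj j)) (e x)) := by
  refine ⟨?_, ?_⟩
  · intro r s _ hr _ hs
    apply LinearMap.ext
    intro x
    apply emb_inj k r s
    rw [emb_pow, opN_pow_p p hp k r s hr hs _ (emb_supp k r s x)]
    simp
  · intro r s hr1 hr hs1 hs d c m hd hc hm
    have hp1 := hp.one_lt
    have hmm := m_eq p r s d c m hp.pos hr hs hd hc hm
    let l : Fin c ⊕ Fin m → ℕ := Sum.elim (fun i => d + 2 * (i : ℕ) + 1) (fun _ => p)
    let δ : Fin c ⊕ Fin m → ℕ := Sum.elim (fun i => min r s - 1 - (i : ℕ)) (fun j => (j : ℕ))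
    have hδ : Function.Injective δ := by
      rintro (i | i) (j | j) h
      · have hi := i.2
        have hj := j.2
        simp only [δ, Sum.elim_inl] at h
        congr 1; ext; omega
      · have hi := i.2
        have hj := j.2
        simp only [δ, Sum.elim_inl, Sum.elim_inr] at h
        omega
      · have hi := i.2
        have hj := j.2
        simp only [δ, Sum.elim_inl, Sum.elim_inr] at h
        omega
      · simp only [δ, Sum.elim_inr] at h
        congr 1; ext; omega
    have hl : ∀ b, 0 < l b := by
      rintro (i | i)
      · simp [l]
      · simpa [l] using hp.pos
    have hex : ∀ b, ∃ x : TensorProduct k (Fin r → k) (Fin s → k),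
        (tensorN k r s ^ (l b)) x = 0 ∧
        (∀ i j, i + j ≠ δ b → emb k r s ((tensorN k r s ^ (l b - 1)) x) i j = 0) ∧
        emb k r s ((tensorN k r s ^ (l b - 1)) x) ≠ 0 := by
      rintro (i | i)
      · have hi := i.2
        obtain ⟨v, h1, h2, h3, h4⟩ := exists_small p k r s (min r s - 1 - (i : ℕ)) (d + 2 * (i : ℕ))
          (by omega) (by omega) (by omega) (by omega) (by omega)
        obtain ⟨x, rfl⟩ := emb_surj k r s v h1
        refine ⟨x, ?_, ?_, ?_⟩
        · apply emb_inj k r s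
          rw [emb_pow, map_zero]; exact h2
        · rw [emb_pow]; exact h3
        · rw [emb_pow]; exact h4
      · have hi := i.2
        obtain ⟨v, h1, h3, h4⟩ := exists_big p hp k r s i hr1 (by omega) (by omega)
        obtain ⟨x, rfl⟩ := emb_surj k r s v h1
        refine ⟨x, ?_, ?_, ?_⟩
        · apply emb_inj k r s
          rw [emb_pow, map_zero]
          exact opN_pow_p p hp k r s (by omega) (by omega) _ h1
        · rw [emb_pow]; exact h3
        · rw [emb_pow]; exact h4
    choose w hw1 hw2 hw3 using hex
    have hli : LinearIndependent k fun b => (tensorN k r s ^ (l b - 1)) (w b) := by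
      rw [Fintype.linearIndependent_iff]
      intro g hg b
      have h0 : ∃ i j, emb k r s ((tensorN k r s ^ (l b - 1)) (w b)) i j ≠ 0 := by
        by_contra hcon
        push Not at hcon
        exact hw3 b (by funext i j; exact hcon i j)
      obtain ⟨i, j, hij⟩ := h0
      have hs : i + j = δ b := by
        by_contra hne; exact hij (hw2 b i j hne)
      have h1 := congrFun (congrFun (congrArg (emb k r s) hg) i) j
      rw [map_sum, Finset.sum_apply, Finset.sum_apply, Finset.sum_eq_single b] at h1
      · rw [map_smul, map_zero] at h1
        exact (mul_eq_zero.1 h1).resolve_right hij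
      · intro bn _ hbn
        rw [map_smul, Pi.smul_apply, Pi.smul_apply, hw2 bn i j, smul_zero]
        rw [hs]
        exact fun h => hbn (hδ h.symm)
      · simp
    have hdim : ∑ b, l b = Module.finrank k (TensorProduct k (Fin r → k) (Fin s → k)) := by
      rw [Module.finrank_tensorProduct, Fintype.sum_sum_type]
      simp only [l, Sum.elim_inl, Sum.elim_inr, sum_sizes, Finset.sum_const, Finset.card_univ,
        Fintype.card_fin, Module.finrank_fin_fun, smul_eq_mul]
      zify
      linarith
    obtain ⟨e, he⟩ := strings_equiv (tensorN k r s) l hl w hw1 hli hdim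
    refine ⟨e.trans (LinearEquiv.sumPiEquivProdPi k (Fin c) (Fin m) (fun b => Fin (l b) → k)),
      fun x => ?_⟩
    exact congrArg (LinearEquiv.sumPiEquivProdPi k (Fin c) (Fin m) (fun b => Fin (l b) → k)) (he x)
end
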